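/- arXiv:2503.22440 — 2 statements merged into one kernel-verified Lean document; each statement's English description precedes it below -/
import Mathlib

section
/- For all signs s₁, s₂, s₃ ∈ {+1, −1} and both * = l and * = r, the model triple-point integrals satisfy I_X^{(X′₂,*), s₁, s₂, s₃} = I_X^{(X′₂,*), s₁, −s₂, −s₃} = I_X^{(X′₂,*), −s₁, −s₂, −s₃}. -/
open MeasureTheory Filter Topology Set

noncomputable section

abbrev E2 : Type := EuclideanSpace ℝ (Fin 2)
abbrev E3 : Type := EuclideanSpace ℝ (Fin 3)
abbrev E4 : Type := EuclideanSpace ℝ (Fin 4)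
abbrev E6 : Type := EuclideanSpace ℝ (Fin 6)

/-- The point of `ℝ³` with the given coordinates. -/
def mk3 (x y z : ℝ) : E3 := (WithLp.equiv 2 (Fin 3 → ℝ)).symm ![x, y, z]

/-- The north pole `N = (0,0,1)` of `S² ⊆ ℝ³`. -/
def NP : E3 := mk3 0 0 1

/-- Projection of `ℝ³` onto the plane `N^⊥` (the first two coordinates). -/
def pr12 (v : E3) : ℝ × ℝ := (v 0, v 1)

/-- The `N`-coordinate. -/
def pr3 (v : E3) : ℝ := v 2

/-- `unitv v = v / ‖v‖`. -/
def unitv (v : E3) : E3 := ‖v‖⁻¹ • v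

/-- Determinant of the projections to `N^⊥` of two vectors (first vector, then second). -/
def cross2 (a b : E3) : ℝ := a 0 * b 1 - a 1 * b 0

/-- 3×3 determinant (scalar triple product); for `p ∈ S²` and `v, w` tangent to `S²` at
`p`, this is the value of the standard area form of `S²` at `p` on `(v, w)`. -/
def det3 (p v w : E3) : ℝ :=
  p 0 * (v 1 * w 2 - v 2 * w 1) - p 1 * (v 0 * w 2 - v 2 * w 0) +
    p 2 * (v 0 * w 1 - v 1 * w 0)

/-! ### Long knots and 3-component long links -/

/-- A long knot: a smooth embedding `ℝ ↪ ℝ³` which is standard outside `[-1,1]`. -/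
def IsLongKnot (f : ℝ → E3) : Prop :=
  ContDiff ℝ (⊤ : ℕ∞) f ∧ Function.Injective f ∧ (∀ t, deriv f t ≠ 0) ∧
    ∀ x : ℝ, 1 ≤ |x| → f x = mk3 x 0 0

/-- Smooth isotopy of long knots. -/
def KnotIsotopic (f₀ f₁ : ℝ → E3) : Prop :=
  ∃ H : ℝ → ℝ → E3,
    ContDiff ℝ (⊤ : ℕ∞) (fun p : ℝ × ℝ => H p.1 p.2) ∧
    (∀ s, IsLongKnot (H s)) ∧ H 0 = f₀ ∧ H 1 = f₁

/-- A 3-component long link: a smooth embedding `ℝ ⊔ ℝ ⊔ ℝ ↪ ℝ³`, standard outside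
`[-1,1]`, component `k` (for `k = 1,2,3`, i.e. index `i = k - 1 : Fin 3`) having ends
`x ↦ (x, (2 - k)|x|, 0)`. -/
def IsLongLink3 (f : Fin 3 → ℝ → E3) : Prop :=
  (∀ i, ContDiff ℝ (⊤ : ℕ∞) (f i)) ∧
  (∀ i j s t, f i s = f j t → i = j ∧ s = t) ∧
  (∀ i t, deriv (f i) t ≠ 0) ∧
  ∀ i (x : ℝ), 1 ≤ |x| → f i x = mk3 x ((1 - ((i : ℕ) : ℝ)) * |x|) 0

/-- Smooth isotopy of 3-component long links. -/
def LinkIsotopic (f₀ f₁ : Fin 3 → ℝ → E3) : Prop :=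
  ∃ H : ℝ → Fin 3 → ℝ → E3,
    (∀ i, ContDiff ℝ (⊤ : ℕ∞) (fun p : ℝ × ℝ => H p.1 i p.2)) ∧
    (∀ s, IsLongLink3 (H s)) ∧ H 0 = f₀ ∧ H 1 = f₁

/-! ### Diagrams, crossings and Gauss diagram pairings -/

/-- All self-intersections of the projection of the long knot `f` are transverse
(any two branches meeting at a multiple point have independent projected tangents). -/
def TransverseK (f : ℝ → E3) : Prop :=
  ∀ t u, t ≠ u → pr12 (f t) = pr12 (f u) → cross2 (deriv f t) (deriv f u) ≠ 0

/-- The diagram of `f` has only transverse double points. -/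
def OnlyDoubleK (f : ℝ → E3) : Prop :=
  TransverseK f ∧
  ∀ t u v : ℝ, t ≠ u → u ≠ v → t ≠ v →
    pr12 (f t) = pr12 (f u) → pr12 (f u) = pr12 (f v) → False

/-- All self-intersections of the projection of the long link `f` are transverse. -/
def TransverseL (f : Fin 3 → ℝ → E3) : Prop :=
  ∀ i j s t, (i, s) ≠ (j, t) → pr12 (f i s) = pr12 (f j t) →
    cross2 (deriv (f i) s) (deriv (f j) t) ≠ 0

/-- The diagram of the long link `f` has only transverse double points. -/
def OnlyDoubleL (f : Fin 3 → ℝ → E3) : Prop :=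
  TransverseL f ∧
  ∀ i j k s t u, (i, s) ≠ (j, t) → (j, t) ≠ (k, u) → (i, s) ≠ (k, u) →
    pr12 (f i s) = pr12 (f j t) → pr12 (f j t) = pr12 (f k u) → False

/-- Crossings of a long knot diagram: pairs `(t, u)` with `t` on the lower and `u` on the
upper strand; the corresponding chord of the Gauss diagram is directed from `t` to `u`. -/
def CrossingK (f : ℝ → E3) : Set (ℝ × ℝ) :=
  {p | p.1 ≠ p.2 ∧ pr12 (f p.1) = pr12 (f p.2) ∧ pr3 (f p.1) < pr3 (f p.2)}

/-- The sign of the crossing `p = (t, u)` (`+1` iff the projected tangent of the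
over-strand followed by that of the under-strand is a positive basis of `N^⊥`). -/
def csignK (f : ℝ → E3) (p : ℝ × ℝ) : ℝ :=
  Real.sign (cross2 (deriv f p.2) (deriv f p.1))

/-- Gauss diagram pairing for a long knot: the sum, over all pairs of chords of the Gauss
diagram of `f` in the relative position prescribed by `R`, of the products of signs. -/
def pairK (f : ℝ → E3) (R : ℝ × ℝ → ℝ × ℝ → Prop) : ℝ :=
  ∑ᶠ q ∈ {q : (ℝ × ℝ) × (ℝ × ℝ) | q.1 ∈ CrossingK f ∧ q.2 ∈ CrossingK f ∧ R q.1 q.2},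
    csignK f q.1 * csignK f q.2

/-- `⟨X, G_D⟩` : chords `x₁ → x₃` and `x₄ → x₂` with `x₁ < x₂ < x₃ < x₄`. -/
def pairXK (f : ℝ → E3) : ℝ :=
  pairK f fun p q => p.1 < q.2 ∧ q.2 < p.2 ∧ p.2 < q.1

/-- `⟨X′₁, G_D⟩` : chords `a → b` and `c → a` with `a < b < c`. -/
def pairX1K (f : ℝ → E3) : ℝ :=
  pairK f fun p q => q.2 = p.1 ∧ p.1 < p.2 ∧ p.2 < q.1

/-- `⟨X′₂, G_D⟩` : chords `a → b` and `c → b` with `a < b < c`. -/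
def pairX2K (f : ℝ → E3) : ℝ :=
  pairK f fun p q => q.2 = p.2 ∧ p.1 < p.2 ∧ p.2 < q.1

/-- `⟨X′₃, G_D⟩` : chords `a → c` and `c → b` with `a < b < c`. -/
def pairX3K (f : ℝ → E3) : ℝ :=
  pairK f fun p q => p.2 = q.1 ∧ p.1 < q.2 ∧ q.2 < p.2

/-- Crossings of a 3-strand diagram between strand `i` (under) and strand `j` (over);
the corresponding chord is directed from `p.1` on strand `i` to `p.2` on strand `j`. -/
def CrossingL (f : Fin 3 → ℝ → E3) (i j : Fin 3) : Set (ℝ × ℝ) :=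
  {p | pr12 (f i p.1) = pr12 (f j p.2) ∧ pr3 (f i p.1) < pr3 (f j p.2)}

/-- The sign of the crossing `p` between strand `i` (under) and strand `j` (over). -/
def csignL (f : Fin 3 → ℝ → E3) (i j : Fin 3) (p : ℝ × ℝ) : ℝ :=
  Real.sign (cross2 (deriv (f j) p.2) (deriv (f i) p.1))

/-- Gauss diagram pairing for a 3-component long link. -/
def pairL (f : Fin 3 → ℝ → E3) (i₁ j₁ i₂ j₂ : Fin 3) (R : ℝ × ℝ → ℝ × ℝ → Prop) : ℝ :=
  ∑ᶠ q ∈ {q : (ℝ × ℝ) × (ℝ × ℝ) |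
      q.1 ∈ CrossingL f i₁ j₁ ∧ q.2 ∈ CrossingL f i₂ j₂ ∧ R q.1 q.2},
    csignL f i₁ j₁ q.1 * csignL f i₂ j₂ q.2

/-- `⟨𝒳₁, G_D⟩` : a chord from `t` on strand 1 to strand 2, and a chord from strand 3 to
`t′` on strand 1, with `t < t′`. -/
def pairL1 (f : Fin 3 → ℝ → E3) : ℝ := pairL f 0 1 2 0 fun p q => p.1 < q.2

/-- `⟨𝒳₂, G_D⟩` : a chord from strand 1 to `u` on strand 2, and a chord from strand 3 to
`u′` on strand 2, with `u < u′`. -/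
def pairL2 (f : Fin 3 → ℝ → E3) : ℝ := pairL f 0 1 2 1 fun p q => p.2 < q.2

/-- `⟨𝒳₃, G_D⟩` : a chord from strand 1 to `v` on strand 3, and a chord from `v′` on
strand 3 to strand 2, with `v < v′`. -/
def pairL3 (f : Fin 3 → ℝ → E3) : ℝ := pairL f 0 2 2 1 fun p q => p.2 < q.1

/-- `⟨𝒳′₁, G_D⟩` : as `𝒳₁` but with `t = t′` (a triple point). -/
def pairL1' (f : Fin 3 → ℝ → E3) : ℝ := pairL f 0 1 2 0 fun p q => p.1 = q.2

/-- `⟨𝒳′₂, G_D⟩` : as `𝒳₂` but with `u = u′` (a triple point). -/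
def pairL2' (f : Fin 3 → ℝ → E3) : ℝ := pairL f 0 1 2 1 fun p q => p.2 = q.2

/-- `⟨𝒳′₃, G_D⟩` : as `𝒳₃` but with `v = v′` (a triple point). -/
def pairL3' (f : Fin 3 → ℝ → E3) : ℝ := pairL f 0 2 2 1 fun p q => p.2 = q.1

/-! ### The localized unit 2-form `η` on `S²` -/

/-- The action of a 2×2 matrix on `ℝ³ = ℝ² × ℝ`, acting on the first two coordinates. -/
def act2 (A : Matrix (Fin 2) (Fin 2) ℝ) (v : E3) : E3 :=
  mk3 (A 0 0 * v 0 + A 0 1 * v 1) (A 1 0 * v 0 + A 1 1 * v 1) (v 2)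

/-- `IsEtaForm ε g` says that `η = g · (standard area form of S²)` is a smooth 2-form on
`S²` such that: (i) `supp η` lies in the `ε`-neighbourhood of the north pole `N`;
(ii) `φ*η = det φ · η` for every `φ ∈ O(2) ⊆ O(3)` (since `φ* (area form) = det φ ·
(area form)`, this amounts to `g ∘ φ = g`); (iii) `∫_{S²} η = 1`, i.e. the integral of
`g` against the surface measure of `S²` is `1`. -/
def IsEtaForm (ε : ℝ) (g : E3 → ℝ) : Prop :=
  ContDiff ℝ (⊤ : ℕ∞) g ∧
  (∀ v : E3, ‖v‖ = 1 → g v ≠ 0 → ‖v - NP‖ < ε) ∧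
  (∀ A : Matrix (Fin 2) (Fin 2) ℝ, A * A.transpose = 1 →
    ∀ v : E3, ‖v‖ = 1 → g (act2 A v) = g v) ∧
  ∫ v : Metric.sphere (0 : E3) 1, g v ∂((volume : Measure E3).toSphere) = 1

/-! ### Configuration space integrals -/

/-- `i`-th partial derivative of a map `ℝⁿ → ℝ³`. -/
def pdv {n : ℕ} (h : EuclideanSpace ℝ (Fin n) → E3) (i : Fin n)
    (x : EuclideanSpace ℝ (Fin n)) : E3 :=
  fderiv ℝ h x (EuclideanSpace.single i 1)

/-- The pullback `h*η` (for `η = g · (area form)`) evaluated at the point `x` on the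
coordinate vectors `(e_i, e_j)`. -/
def form2 {n : ℕ} (g : E3 → ℝ) (h : EuclideanSpace ℝ (Fin n) → E3)
    (x : EuclideanSpace ℝ (Fin n)) (i j : Fin n) : ℝ :=
  g (h x) * det3 (h x) (pdv h i x) (pdv h j x)

/-- `(h*η ∧ k*η)(e₀, e₁, e₂, e₃)` at `x`. -/
def wedge22 (g : E3 → ℝ) (h k : E4 → E3) (x : E4) : ℝ :=
  (1 / 4) * ∑ σ : Equiv.Perm (Fin 4),
    ((Equiv.Perm.sign σ : ℤ) : ℝ) * form2 g h x (σ 0) (σ 1) * form2 g k x (σ 2) (σ 3)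

/-- `(h*η ∧ k*η ∧ l*η)(e₀, …, e₅)` at `x`. -/
def wedge222 (g : E3 → ℝ) (h k l : E6 → E3) (x : E6) : ℝ :=
  (1 / 8) * ∑ σ : Equiv.Perm (Fin 6),
    ((Equiv.Perm.sign σ : ℤ) : ℝ) * form2 g h x (σ 0) (σ 1) * form2 g k x (σ 2) (σ 3) *
      form2 g l x (σ 4) (σ 5)

/-- The configuration space `C_X = {x₁ < x₂ < x₃ < x₄}`. -/
def CX : Set E4 := {x | x 0 < x 1 ∧ x 1 < x 2 ∧ x 2 < x 3}

/-- The integrand `ω_X = h₁₃*η ∧ h₄₂*η` for a long knot. -/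
def omegaX (f : ℝ → E3) (g : E3 → ℝ) : E4 → ℝ :=
  wedge22 g (fun x => unitv (f (x 2) - f (x 0))) (fun x => unitv (f (x 1) - f (x 3)))

/-- The configuration space integral `I_X(f)` of a long knot. -/
def IX (f : ℝ → E3) (g : E3 → ℝ) : ℝ := ∫ x in CX, omegaX f g x

/-- The free point `x₄ ∈ ℝ³` in a `Y`-configuration `(x₁,x₂,x₃;x₄) ∈ ℝ³ × ℝ³ = ℝ⁶`. -/
def ptY (x : E6) : E3 := mk3 (x 3) (x 4) (x 5)

/-- The configuration space `C_Y(f)` for a long knot. -/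
def CY (f : ℝ → E3) : Set E6 :=
  {x | x 0 < x 1 ∧ x 1 < x 2 ∧ ptY x ≠ f (x 0) ∧ ptY x ≠ f (x 1) ∧ ptY x ≠ f (x 2)}

/-- The integrand `ω_Y = h₁₄*η ∧ h₄₂*η ∧ h₃₄*η` for a long knot. -/
def omegaY (f : ℝ → E3) (g : E3 → ℝ) : E6 → ℝ :=
  wedge222 g (fun x => unitv (ptY x - f (x 0))) (fun x => unitv (f (x 1) - ptY x))
    (fun x => unitv (ptY x - f (x 2)))

/-- The configuration space integral `I_Y(f)` of a long knot. -/
def IY (f : ℝ → E3) (g : E3 → ℝ) : ℝ := ∫ x in CY f, omegaY f g x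

def CL1 : Set E4 := {x | x 0 < x 1}
def CL2 : Set E4 := {x | x 1 < x 2}
def CL3 : Set E4 := {x | x 2 < x 3}

/-- The integrand of `I_{𝒳₁}(f)` for a 3-component long link. -/
def omegaL1 (f : Fin 3 → ℝ → E3) (g : E3 → ℝ) : E4 → ℝ :=
  wedge22 g (fun x => unitv (f 1 (x 2) - f 0 (x 0))) (fun x => unitv (f 2 (x 3) - f 0 (x 1)))

/-- The integrand of `I_{𝒳₂}(f)` for a 3-component long link. -/
def omegaL2 (f : Fin 3 → ℝ → E3) (g : E3 → ℝ) : E4 → ℝ :=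
  wedge22 g (fun x => unitv (f 1 (x 1) - f 0 (x 0))) (fun x => unitv (f 1 (x 2) - f 2 (x 3)))

/-- The integrand of `I_{𝒳₃}(f)` for a 3-component long link. -/
def omegaL3 (f : Fin 3 → ℝ → E3) (g : E3 → ℝ) : E4 → ℝ :=
  wedge22 g (fun x => unitv (f 2 (x 2) - f 0 (x 0))) (fun x => unitv (f 1 (x 1) - f 2 (x 3)))

/-- The configuration space integral `I_{𝒳₁}(f)`. -/
def IL1 (f : Fin 3 → ℝ → E3) (g : E3 → ℝ) : ℝ := ∫ x in CL1, omegaL1 f g x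

/-- The configuration space integral `I_{𝒳₂}(f)`. -/
def IL2 (f : Fin 3 → ℝ → E3) (g : E3 → ℝ) : ℝ := ∫ x in CL2, omegaL2 f g x

/-- The configuration space integral `I_{𝒳₃}(f)`. -/
def IL3 (f : Fin 3 → ℝ → E3) (g : E3 → ℝ) : ℝ := ∫ x in CL3, omegaL3 f g x

/-- The configuration space `C_𝒴(f)` for a 3-component long link. -/
def CYL (f : Fin 3 → ℝ → E3) : Set E6 :=
  {x | ptY x ≠ f 0 (x 0) ∧ ptY x ≠ f 1 (x 1) ∧ ptY x ≠ f 2 (x 2)}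

/-- The integrand `ω_𝒴 = h₁₄*η ∧ h₄₂*η ∧ h₃₄*η` for a 3-component long link. -/
def omegaYL (f : Fin 3 → ℝ → E3) (g : E3 → ℝ) : E6 → ℝ :=
  wedge222 g (fun x => unitv (ptY x - f 0 (x 0))) (fun x => unitv (f 1 (x 1) - ptY x))
    (fun x => unitv (ptY x - f 2 (x 2)))

/-- The configuration space integral `I_𝒴(f)`. -/
def ILY (f : Fin 3 → ℝ → E3) (g : E3 → ℝ) : ℝ := ∫ x in CYL f, omegaYL f g x

/-! ### Model triple points -/

/-- The affine parametrization `t ↦ a + t • v` of a straight segment. -/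
def seg (a v : E3) (t : ℝ) : E3 := a + t • v

/-- A model triple point: three straight segments `S₁, S₂, S₃` (indexed by `0, 1, 2`),
`S_k` parametrized by `seg (a k) (v k) : (-δ, δ) → ℝ³`, all parallel to the plane
`N^⊥`, whose projections to `N^⊥` meet pairwise transversely at the single common point
which is the projection of each midpoint `a k`, and with `S₂` higher than `S₁`, `S₃`. -/
def IsModelTriple (a v : Fin 3 → E3) : Prop :=
  (∀ k, v k 2 = 0) ∧ (∀ k, v k ≠ 0) ∧
  pr12 (a 0) = pr12 (a 1) ∧ pr12 (a 1) = pr12 (a 2) ∧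
  (∀ j k, j ≠ k → cross2 (v j) (v k) ≠ 0) ∧
  a 0 2 < a 1 2 ∧ a 2 2 < a 1 2

/-- A model triple point of type `(←, s₁, s₂, s₃)`: `S₁` passes over `S₃`, and the signs
of the crossings `S₁–S₃`, `S₁–S₂`, `S₂–S₃` are `s₁, s₂, s₃` respectively. -/
def ModelLeft (a v : Fin 3 → E3) (s1 s2 s3 : ℝ) : Prop :=
  IsModelTriple a v ∧ a 2 2 < a 0 2 ∧
  s1 = Real.sign (cross2 (v 0) (v 2)) ∧
  s2 = Real.sign (cross2 (v 1) (v 0)) ∧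
  s3 = Real.sign (cross2 (v 1) (v 2))

/-- A model triple point of type `(→, s₁, s₂, s₃)`: `S₃` passes over `S₁`, and the signs
of the crossings `S₁–S₃`, `S₁–S₂`, `S₂–S₃` are `s₁, s₂, s₃` respectively. -/
def ModelRight (a v : Fin 3 → E3) (s1 s2 s3 : ℝ) : Prop :=
  IsModelTriple a v ∧ a 0 2 < a 2 2 ∧
  s1 = Real.sign (cross2 (v 2) (v 0)) ∧
  s2 = Real.sign (cross2 (v 1) (v 0)) ∧
  s3 = Real.sign (cross2 (v 1) (v 2))

/-- The cube `(-δ, δ)⁴ ⊆ ℝ⁴`. -/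
def cube4 (δ : ℝ) : Set E4 := {x | ∀ i, |x i| < δ}

/-- The model configuration space integral `I_X^{X′₁}`: the two points `t₁ < t₂` lie on
`S₁`, the point `t₃` on `S₂` and the point `t₄` on `S₃`; the maps are
`h₁₃ = unit (f₂(t₃) - f₁(t₁))` and `h₄₂ = unit (f₁(t₂) - f₃(t₄))`. -/
def IX1model (a v : Fin 3 → E3) (δ : ℝ) (g : E3 → ℝ) : ℝ :=
  ∫ x in cube4 δ ∩ {x : E4 | x 0 < x 1},
    wedge22 g (fun x => unitv (seg (a 1) (v 1) (x 2) - seg (a 0) (v 0) (x 0)))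
      (fun x => unitv (seg (a 0) (v 0) (x 1) - seg (a 2) (v 2) (x 3))) x

/-- The model configuration space integral `I_X^{X′₂}` (`(X′₂, l)` for a model of type
`←`, `(X′₂, r)` for a model of type `→`): the two points `t₂ < t₃` lie on `S₂`, the
point `t₁` on `S₁` and the point `t₄` on `S₃`; the maps are
`h₁₃ = unit (f₂(t₃) - f₁(t₁))` and `h₄₂ = unit (f₂(t₂) - f₃(t₄))`. -/
def IX2model (a v : Fin 3 → E3) (δ : ℝ) (g : E3 → ℝ) : ℝ :=
  ∫ x in cube4 δ ∩ {x : E4 | x 1 < x 2},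
    wedge22 g (fun x => unitv (seg (a 1) (v 1) (x 2) - seg (a 0) (v 0) (x 0)))
      (fun x => unitv (seg (a 1) (v 1) (x 1) - seg (a 2) (v 2) (x 3))) x

/-- The model configuration space integral `I_X^{X′₃}`: the two points `t₃ < t₄` lie on
`S₃`, the point `t₁` on `S₁` and the point `t₂` on `S₂`; the maps are
`h₁₃ = unit (f₃(t₃) - f₁(t₁))` and `h₄₂ = unit (f₂(t₂) - f₃(t₄))`. -/
def IX3model (a v : Fin 3 → E3) (δ : ℝ) (g : E3 → ℝ) : ℝ :=
  ∫ x in cube4 δ ∩ {x : E4 | x 2 < x 3},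
    wedge22 g (fun x => unitv (seg (a 2) (v 2) (x 2) - seg (a 0) (v 0) (x 0)))
      (fun x => unitv (seg (a 1) (v 1) (x 1) - seg (a 2) (v 2) (x 3))) x

/-- The model `Y`-integral `I_Y^{s₁,s₂,s₃}` over `(-δ,δ)³ × ℝ³`: the point `t_k` lies on
`S_k` and `x₄ ∈ ℝ³` is free; the maps are `h₁₄ = unit (x₄ - f₁(t₁))`,
`h₄₂ = unit (f₂(t₂) - x₄)` and `h₃₄ = unit (x₄ - f₃(t₃))`. -/
def IYmodel (a v : Fin 3 → E3) (δ : ℝ) (g : E3 → ℝ) : ℝ :=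
  ∫ x in {x : E6 | |x 0| < δ ∧ |x 1| < δ ∧ |x 2| < δ ∧
      ptY x ≠ seg (a 0) (v 0) (x 0) ∧ ptY x ≠ seg (a 1) (v 1) (x 1) ∧
      ptY x ≠ seg (a 2) (v 2) (x 2)},
    wedge222 g (fun x => unitv (ptY x - seg (a 0) (v 0) (x 0)))
      (fun x => unitv (seg (a 1) (v 1) (x 1) - ptY x))
      (fun x => unitv (ptY x - seg (a 2) (v 2) (x 2))) x

/-- Near every (triple or higher) multiple point of the diagram, the strands of the long
knot `f` are straight segments parallel to the plane `N^⊥`. -/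
def StraightNearMultipleK (f : ℝ → E3) : Prop :=
  ∀ t u v : ℝ, t ≠ u → u ≠ v → t ≠ v →
    pr12 (f t) = pr12 (f u) → pr12 (f u) = pr12 (f v) →
    ∃ δ > (0 : ℝ), ∃ w : E3, w 2 = 0 ∧ ∀ s : ℝ, |s - t| < δ → f s = f t + (s - t) • w

/-- Near every (triple or higher) multiple point of the diagram, the strands of the long
link `f` are straight segments parallel to the plane `N^⊥`. -/
def StraightNearMultipleL (f : Fin 3 → ℝ → E3) : Prop :=
  ∀ (i j k : Fin 3) (t u v : ℝ), (i, t) ≠ (j, u) → (j, u) ≠ (k, v) → (i, t) ≠ (k, v) →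
    pr12 (f i t) = pr12 (f j u) → pr12 (f j u) = pr12 (f k v) →
    ∃ δ > (0 : ℝ), ∃ w : E3, w 2 = 0 ∧ ∀ s : ℝ, |s - t| < δ → f i s = f i t + (s - t) • w

/-! ### Closed 2-component links and the linking number -/

/-- A smooth loop in `ℝ³`, parametrized with period 1 and injective on a period. -/
def IsLoop (f : ℝ → E3) : Prop :=
  ContDiff ℝ (⊤ : ℕ∞) f ∧ (∀ t, f (t + 1) = f t) ∧ (∀ t, deriv f t ≠ 0) ∧
    ∀ s t : ℝ, f s = f t → ∃ n : ℤ, t - s = n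

/-- The diagram of the 2-component link `(f 0, f 1)` has only transverse double points. -/
def OnlyDouble2 (f : Fin 2 → ℝ → E3) : Prop :=
  (∀ i j s t, f i s ≠ f j t → pr12 (f i s) = pr12 (f j t) →
      cross2 (deriv (f i) s) (deriv (f j) t) ≠ 0) ∧
  ∀ i j k s t u, f i s ≠ f j t → f j t ≠ f k u → f i s ≠ f k u →
    pr12 (f i s) = pr12 (f j t) → pr12 (f j t) = pr12 (f k u) → False

/-- The crossings of the diagram at which `f₂` passes over `f₁` (one parameter period). -/
def Crossing12 (f₁ f₂ : ℝ → E3) : Set (ℝ × ℝ) :=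
  {p | p.1 ∈ Ico (0 : ℝ) 1 ∧ p.2 ∈ Ico (0 : ℝ) 1 ∧
    pr12 (f₁ p.1) = pr12 (f₂ p.2) ∧ pr3 (f₁ p.1) < pr3 (f₂ p.2)}

/-- The sum of the signs of the crossings of the diagram at which `f₂` passes over `f₁`;
this is the linking number `lk(f₁, f₂)`, i.e. the mapping degree of
`h : S¹ × S¹ → S²`. -/
def lkSum (f₁ f₂ : ℝ → E3) : ℝ :=
  ∑ᶠ p ∈ Crossing12 f₁ f₂, Real.sign (cross2 (deriv f₂ p.2) (deriv f₁ p.1))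

/-- The fundamental domain `[0,1) × [0,1)` of `S¹ × S¹`. -/
def sq01 : Set E2 := {x | x 0 ∈ Ico (0 : ℝ) 1 ∧ x 1 ∈ Ico (0 : ℝ) 1}

/-- `∫_{S¹×S¹} h*η` for `h(x₁,x₂) = unit (f₂(x₂) - f₁(x₁))`. -/
def lkIntegral (f₁ f₂ : ℝ → E3) (g : E3 → ℝ) : ℝ :=
  ∫ x in sq01, form2 g (fun x : E2 => unitv (f₂ (x 1) - f₁ (x 0))) x 0 1


def psi14 (g : E3 → ℝ) (a b : ℝ) : ℝ := g (unitv (mk3 a b 1)) * (‖mk3 a b 1‖⁻¹) ^ 3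

def Psi14 (g : E3 → ℝ) (y : Fin 4 → ℝ) : ℝ := psi14 g (y 0) (y 1) * psi14 g (y 2) (y 3)

lemma mk3_0 (a b c : ℝ) : mk3 a b c 0 = a := rfl
lemma mk3_1 (a b c : ℝ) : mk3 a b c 1 = b := rfl
lemma mk3_2 (a b c : ℝ) : mk3 a b c 2 = c := rfl

lemma mk3_eta (w : E3) : mk3 (w 0) (w 1) (w 2) = w := by
  ext i; fin_cases i <;> rfl

lemma mk3_ne (a b : ℝ) : mk3 a b 1 ≠ 0 := by
  intro h
  have := congrArg (fun v : E3 => v 2) h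
  simp [mk3_2] at this

lemma norm_mk3_pos (a b : ℝ) : 0 < ‖mk3 a b 1‖ := norm_pos_iff.mpr (mk3_ne a b)

lemma mk3_cont : Continuous (fun p : ℝ × ℝ => mk3 p.1 p.2 1) := by
  unfold mk3
  refine (PiLp.continuous_toLp 2 _).comp ?_
  refine continuous_pi fun i => ?_
  fin_cases i <;> simp <;> fun_prop

lemma psi14_cont (g : E3 → ℝ) (hg : Continuous g) :
    Continuous (fun p : ℝ × ℝ => psi14 g p.1 p.2) := by
  unfold psi14 unitv
  have h1 : Continuous (fun p : ℝ × ℝ => ‖mk3 p.1 p.2 1‖⁻¹) :=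
    mk3_cont.norm.inv₀ fun p => (norm_mk3_pos p.1 p.2).ne'
  exact (hg.comp (h1.smul mk3_cont)).mul (h1.pow 3)

lemma Psi14_cont (g : E3 → ℝ) (hg : Continuous g) : Continuous (Psi14 g) := by
  have h := psi14_cont g hg
  have h1 : Continuous (fun y : Fin 4 → ℝ => psi14 g (y 0) (y 1)) :=
    h.comp (g := fun p : ℝ × ℝ => psi14 g p.1 p.2) (f := fun y : Fin 4 → ℝ => (y 0, y 1))
      (by fun_prop)
  have h2 : Continuous (fun y : Fin 4 → ℝ => psi14 g (y 2) (y 3)) :=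
    h.comp (g := fun p : ℝ × ℝ => psi14 g p.1 p.2) (f := fun y : Fin 4 → ℝ => (y 2, y 3))
      (by fun_prop)
  exact h1.mul h2

lemma unitv_smul {c : ℝ} (hc : 0 < c) (w : E3) : unitv (c • w) = unitv w := by
  unfold unitv
  rw [norm_smul, smul_smul, Real.norm_of_nonneg hc.le]
  congr 1
  field_simp

lemma norm_unitv {w : E3} (hw : w ≠ 0) : ‖unitv w‖ = 1 := by
  unfold unitv
  rw [norm_smul, norm_inv, norm_norm, inv_mul_cancel₀ (norm_ne_zero_iff.mpr hw)]

lemma psi14_even {ε : ℝ} {g : E3 → ℝ} (hg : IsEtaForm ε g) (a b : ℝ) :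
    psi14 g (-a) (-b) = psi14 g a b := by
  have hn : ‖mk3 (-a) (-b) 1‖ = ‖mk3 a b 1‖ := by
    simp [EuclideanSpace.norm_eq, Fin.sum_univ_three, mk3_0, mk3_1, mk3_2]
  have h := hg.2.2.1 (-1) (by simp) (unitv (mk3 a b 1)) (norm_unitv (mk3_ne a b))
  unfold psi14
  rw [hn, ← h]
  congr 2
  ext i
  fin_cases i <;> simp [act2, unitv, hn, mk3_0, mk3_1, mk3_2]

lemma psi14_supp {ε : ℝ} {g : E3 → ℝ} (hε : ε < 1 / 2) (hg : IsEtaForm ε g) (a b : ℝ)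
    (h : psi14 g a b ≠ 0) : |a| < 2 * ε ∧ |b| < 2 * ε := by
  have h1 := hg.2.1 _ (norm_unitv (mk3_ne a b)) (left_ne_zero_of_mul h)
  have hc : ∀ i, |(unitv (mk3 a b 1) - NP) i| < ε := fun i =>
    lt_of_le_of_lt (by simpa using PiLp.norm_apply_le (unitv (mk3 a b 1) - NP) i) h1
  have h0 := hc 0
  have h1' := hc 1
  have h2 := hc 2
  simp only [unitv, NP, PiLp.sub_apply, PiLp.smul_apply, mk3_0, mk3_1, mk3_2, smul_eq_mul,
    sub_zero, mul_one] at h0 h1' h2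
  have hp := norm_mk3_pos a b
  set r := ‖mk3 a b 1‖⁻¹ with hr
  have hr2 : 1 / 2 < r := by linarith [(abs_lt.mp h2).1]
  rw [abs_mul, abs_of_pos (by linarith : 0 < r)] at h0 h1'
  constructor <;> nlinarith [abs_nonneg a, abs_nonneg b]

lemma Psi14_supp {ε : ℝ} {g : E3 → ℝ} (hε0 : 0 < ε) (hε : ε < 1 / 2) (hg : IsEtaForm ε g)
    (y : Fin 4 → ℝ) (h : Psi14 g y ≠ 0) : ‖y‖ < 2 * ε := by
  obtain ⟨h0, h1⟩ := psi14_supp hε hg _ _ (left_ne_zero_of_mul h)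
  obtain ⟨h2, h3⟩ := psi14_supp hε hg _ _ (right_ne_zero_of_mul h)
  rw [pi_norm_lt_iff (by linarith)]
  intro i
  fin_cases i <;> simpa

lemma sum_perm4 (A B : Fin 4 → Fin 4 → ℝ) (α β : ℝ)
    (hA : ∀ i j, A i j = if i = 0 ∧ j = 2 then α else if i = 2 ∧ j = 0 then -α else 0)
    (hB : ∀ i j, B i j = if i = 1 ∧ j = 3 then β else if i = 3 ∧ j = 1 then -β else 0) :
    ∑ σ : Equiv.Perm (Fin 4), ((Equiv.Perm.sign σ : ℤ) : ℝ) * A (σ 0) (σ 1) * B (σ 2) (σ 3)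
      = - (4 * (α * β)) := by
  have key : ∀ σ : Equiv.Perm (Fin 4), ((Equiv.Perm.sign σ : ℤ) : ℝ) * A (σ 0) (σ 1) * B (σ 2) (σ 3)
      = ((if (σ 0 = 0 ∧ σ 1 = 2 ∨ σ 0 = 2 ∧ σ 1 = 0) then -1 else 0 : ℤ) : ℝ) * (α * β) := by
    intro σ
    rw [hA, hB]
    have : ∀ σ : Equiv.Perm (Fin 4),
      (Equiv.Perm.sign σ : ℤ) * (if σ 0 = 0 ∧ σ 1 = 2 then 1 else if σ 0 = 2 ∧ σ 1 = 0 then -1 else 0)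
       * (if σ 2 = 1 ∧ σ 3 = 3 then 1 else if σ 2 = 3 ∧ σ 3 = 1 then -1 else 0)
       = (if (σ 0 = 0 ∧ σ 1 = 2 ∨ σ 0 = 2 ∧ σ 1 = 0) then -1 else 0 : ℤ) := by decide
    rw [← this σ]
    push_cast
    split_ifs <;> simp <;> ring
  rw [Finset.sum_congr rfl fun σ _ => key σ, ← Finset.sum_mul, ← Int.cast_sum]
  have : ∑ σ : Equiv.Perm (Fin 4), (if (σ 0 = 0 ∧ σ 1 = 2 ∨ σ 0 = 2 ∧ σ 1 = 0) then -1 else 0 : ℤ) = -4 := by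
    decide
  rw [this]; push_cast; ring

/-- Pullback form along unit of an affine map. -/
lemma form2_unitv (g : E3 → ℝ) (w : E4 → E3) (w' : E4 →L[ℝ] E3) (x : E4)
    (hw : HasFDerivAt w w' x) (h : ℝ) (hh : 0 < h) (h2 : w x 2 = h)
    (hv : ∀ y, w' y 2 = 0) (i j : Fin 4) :
    form2 g (fun x => unitv (w x)) x i j = psi14 g (w x 0 / h) (w x 1 / h) * (h ^ 2)⁻¹ *
      cross2 (w' (EuclideanSpace.single i 1)) (w' (EuclideanSpace.single j 1)) := by
  have hne : w x ≠ 0 := by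
    intro h0; rw [h0] at h2; simp at h2; linarith
  have hd : DifferentiableAt ℝ (fun x => ‖w x‖⁻¹) x :=
    (hw.differentiableAt.norm ℝ hne).inv (norm_ne_zero_iff.mpr hne)
  have hf : HasFDerivAt (fun x => unitv (w x)) _ x := hd.hasFDerivAt.smul hw
  have e : w x = h • mk3 (w x 0 / h) (w x 1 / h) 1 := by
    ext i; fin_cases i <;> simp [mk3_0, mk3_1, mk3_2, h2] <;> field_simp
  have hu : unitv (w x) = unitv (mk3 (w x 0 / h) (w x 1 / h) 1) := by
    conv_lhs => rw [e]
    exact unitv_smul hh _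
  have hn : ‖w x‖⁻¹ = h⁻¹ * ‖mk3 (w x 0 / h) (w x 1 / h) 1‖⁻¹ := by
    conv_lhs => rw [e]
    rw [norm_smul, Real.norm_of_nonneg hh.le, mul_inv]
  unfold form2 pdv
  rw [hf.fderiv]
  simp only [psi14]
  rw [← hu]
  have hi := hv (EuclideanSpace.single i 1)
  have hj := hv (EuclideanSpace.single j 1)
  have : det3 (unitv (w x)) ((‖w x‖⁻¹ • w' + (fderiv ℝ (fun x => ‖w x‖⁻¹) x).smulRight (w x)) (EuclideanSpace.single i 1))
     ((‖w x‖⁻¹ • w' + (fderiv ℝ (fun x => ‖w x‖⁻¹) x).smulRight (w x)) (EuclideanSpace.single j 1))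
     = (‖w x‖⁻¹) ^ 3 * h * cross2 (w' (EuclideanSpace.single i 1)) (w' (EuclideanSpace.single j 1)) := by
    simp only [det3, unitv, cross2, add_apply, smul_apply,
      ContinuousLinearMap.smulRight_apply, PiLp.add_apply, PiLp.smul_apply, smul_eq_mul, hi, hj, h2]
    ring
  rw [this, hn]
  field_simp

def Mat14 (v : Fin 3 → E3) (h k : ℝ) : Matrix (Fin 4) (Fin 4) ℝ :=
  !![-(v 0 0) / h, 0, v 1 0 / h, 0;
     -(v 0 1) / h, 0, v 1 1 / h, 0;
     0, v 1 0 / k, 0, -(v 2 0) / k;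
     0, v 1 1 / k, 0, -(v 2 1) / k]

lemma Mat14_det (v : Fin 3 → E3) (h k : ℝ) (hh : 0 < h) (hk : 0 < k) :
    (Mat14 v h k).det = cross2 (v 1) (v 0) * cross2 (v 1) (v 2) / (h ^ 2 * k ^ 2) := by
  simp [Mat14, Matrix.det_succ_row_zero, Fin.sum_univ_succ, cross2, Fin.succAbove]
  field_simp
  ring

lemma hasFDerivAt_seg (a b u w : E3) (i j : Fin 4) (x : E4) :
    HasFDerivAt (fun x : E4 => seg a u (x i) - seg b w (x j))
      ((EuclideanSpace.proj i : E4 →L[ℝ] ℝ).smulRight u -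
        (EuclideanSpace.proj j : E4 →L[ℝ] ℝ).smulRight w) x := by
  unfold seg
  have h1 : ∀ i (u : E3), HasFDerivAt (fun x : E4 => x i • u)
      ((EuclideanSpace.proj i : E4 →L[ℝ] ℝ).smulRight u) x := fun i u =>
    ((EuclideanSpace.proj i : E4 →L[ℝ] ℝ).smulRight u).hasFDerivAt
  exact ((h1 i u).const_add a).sub ((h1 j w).const_add b)

lemma wedge_eq (g : E3 → ℝ) (a v : Fin 3 → E3) (hM : IsModelTriple a v) (x : E4) :
    wedge22 g (fun x => unitv (seg (a 1) (v 1) (x 2) - seg (a 0) (v 0) (x 0)))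
      (fun x => unitv (seg (a 1) (v 1) (x 1) - seg (a 2) (v 2) (x 3))) x =
    (Mat14 v (a 1 2 - a 0 2) (a 1 2 - a 2 2)).det *
      Psi14 g (Matrix.toLin' (Mat14 v (a 1 2 - a 0 2) (a 1 2 - a 2 2)) x.ofLp) := by
  obtain ⟨hv, -, h01, h12, -, hh, hk⟩ := hM
  have hh' := sub_pos.mpr hh
  have hk' := sub_pos.mpr hk
  simp only [pr12, Prod.mk.injEq] at h01 h12
  rw [Mat14_det _ _ _ hh' hk']
  set h := a 1 2 - a 0 2 with hdef
  set k := a 1 2 - a 2 2 with kdef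
  set y := Matrix.toLin' (Mat14 v h k) x.ofLp with hy
  have A := form2_unitv g _ _ x (hasFDerivAt_seg (a 1) (a 0) (v 1) (v 0) 2 0 x) h hh'
    (by simp [seg, hv, hdef]) (by intro y; simp [hv])
  have B := form2_unitv g _ _ x (hasFDerivAt_seg (a 1) (a 2) (v 1) (v 2) 1 3 x) k hk'
    (by simp [seg, hv, kdef]) (by intro y; simp [hv])
  have y0 : (seg (a 1) (v 1) (x 2) - seg (a 0) (v 0) (x 0)) 0 / h = y 0 := by
    simp [hy, Mat14, dotProduct, Fin.sum_univ_four, seg, h01]; ring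
  have y1 : (seg (a 1) (v 1) (x 2) - seg (a 0) (v 0) (x 0)) 1 / h = y 1 := by
    simp [hy, Mat14, dotProduct, Fin.sum_univ_four, seg, h01]; ring
  have y2 : (seg (a 1) (v 1) (x 1) - seg (a 2) (v 2) (x 3)) 0 / k = y 2 := by
    simp [hy, Mat14, dotProduct, Fin.sum_univ_four, seg, h12]; ring
  have y3 : (seg (a 1) (v 1) (x 1) - seg (a 2) (v 2) (x 3)) 1 / k = y 3 := by
    simp [hy, Mat14, dotProduct, Fin.sum_univ_four, seg, h12]; ring
  rw [y0, y1] at A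
  rw [y2, y3] at B
  unfold wedge22
  rw [sum_perm4 _ _ (psi14 g (y 0) (y 1) * (h ^ 2)⁻¹ * cross2 (v 1) (v 0))
    (psi14 g (y 2) (y 3) * (k ^ 2)⁻¹ * (- cross2 (v 1) (v 2)))]
  · unfold Psi14
    field_simp
  · intro i j
    rw [A]
    fin_cases i <;> fin_cases j <;> simp [cross2] <;> ring_nf <;> simp
  · intro i j
    rw [B]
    fin_cases i <;> fin_cases j <;> simp [cross2] <;> ring_nf <;> simp

lemma half_integral (F : (Fin 4 → ℝ) → ℝ) (hF : Integrable F) (he : ∀ x, F (-x) = F x) :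
    ∫ x in {x : Fin 4 → ℝ | x 1 < x 2}, F x = (1 / 2) * ∫ x, F x := by
  have hm : MeasurableSet {x : Fin 4 → ℝ | x 1 < x 2} :=
    measurableSet_lt (measurable_pi_apply 1) (measurable_pi_apply 2)
  have hm' : MeasurableSet {x : Fin 4 → ℝ | x 2 < x 1} :=
    measurableSet_lt (measurable_pi_apply 2) (measurable_pi_apply 1)
  have h1 := integral_add_compl hm hF
  have h2 : ∫ x in {x : Fin 4 → ℝ | x 2 < x 1}, F x = ∫ x in {x : Fin 4 → ℝ | x 1 < x 2}, F x := by
    rw [← integral_indicator hm, ← integral_indicator hm', ← integral_neg_eq_self]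
    refine integral_congr_ae (Eventually.of_forall fun x => ?_)
    simp [indicator, he]
  have h3 : ({x : Fin 4 → ℝ | x 1 < x 2}ᶜ : Set (Fin 4 → ℝ)) =ᵐ[volume] {x | x 2 < x 1} := by
    have hnull : volume {x : Fin 4 → ℝ | x 1 = x 2} = 0 := by
      let S : Submodule ℝ (Fin 4 → ℝ) := LinearMap.ker
        ((LinearMap.proj 1 : (Fin 4 → ℝ) →ₗ[ℝ] ℝ) - LinearMap.proj 2)
      have hS : (S : Set (Fin 4 → ℝ)) = {x | x 1 = x 2} := by
        ext x; simp [S, sub_eq_zero]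
      rw [← hS]
      refine Measure.addHaar_submodule volume S ?_
      intro hT
      have : (Pi.single 1 1 : Fin 4 → ℝ) ∈ S := hT ▸ Submodule.mem_top
      simp [S] at this
    have : ∀ᵐ x : Fin 4 → ℝ, ¬ (x 1 = x 2) := by
      rw [ae_iff]; simpa using hnull
    filter_upwards [this] with x hx
    apply propext
    show ¬ (x 1 < x 2) ↔ x 2 < x 1
    rw [not_lt]
    exact ⟨fun h => lt_of_le_of_ne h (Ne.symm hx), le_of_lt⟩
  rw [setIntegral_congr_set h3, h2] at h1
  linarith

lemma change_var (M : Matrix (Fin 4) (Fin 4) ℝ) (hM : M.det ≠ 0) (F : (Fin 4 → ℝ) → ℝ)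
    (hF : Continuous F) : ∫ x, F (Matrix.toLin' M x) = |M.det|⁻¹ * ∫ y, F y := by
  have h := Real.map_matrix_volume_pi_eq_smul_volume_pi hM
  have hc : Continuous (Matrix.toLin' M) := LinearMap.continuous_of_finiteDimensional _
  rw [← integral_map hc.aemeasurable hF.aestronglyMeasurable, h, integral_smul_measure,
    ENNReal.toReal_ofReal (abs_nonneg _), abs_inv, smul_eq_mul]

lemma key14 (a v : Fin 3 → E3) (δ : ℝ) (hδ : 0 < δ) (hM : IsModelTriple a v) :
    ∃ ε₀ > (0 : ℝ), ∀ ε : ℝ, 0 < ε → ε < ε₀ → ∀ g : E3 → ℝ, IsEtaForm ε g →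
      IX2model a v δ g = Real.sign (cross2 (v 1) (v 0)) * Real.sign (cross2 (v 1) (v 2)) *
        ((1 / 2) * ∫ y, Psi14 g y) := by
  have hM' := hM
  obtain ⟨hv, -, h01, h12, hc, hh, hk⟩ := hM'
  have hh' := sub_pos.mpr hh
  have hk' := sub_pos.mpr hk
  have hc1 := hc 1 0 (by decide)
  have hc2 := hc 1 2 (by decide)
  have hdet := Mat14_det v _ _ hh' hk'
  have W := fun g => wedge_eq g a v hM
  set M := Mat14 v (a 1 2 - a 0 2) (a 1 2 - a 2 2)
  set h := a 1 2 - a 0 2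
  set k := a 1 2 - a 2 2
  have hd : M.det ≠ 0 := by
    rw [hdet]; positivity
  have hsign : M.det * |M.det|⁻¹ =
      Real.sign (cross2 (v 1) (v 0)) * Real.sign (cross2 (v 1) (v 2)) := by
    rw [hdet, abs_div, abs_mul, abs_of_pos (by positivity : 0 < h ^ 2 * k ^ 2)]
    rcases lt_or_gt_of_ne hc1 with p | p <;> rcases lt_or_gt_of_ne hc2 with q | q <;>
    simp only [p, q, Real.sign_of_neg, Real.sign_of_pos, abs_of_neg, abs_of_pos] <;> field_simp
  obtain ⟨K, hK, hKL⟩ := LinearMap.exists_antilipschitzWith (Matrix.toLin' M)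
    (by
      rw [LinearMap.ker_eq_bot]
      intro x y hxy
      rw [Matrix.toLin'_apply, Matrix.toLin'_apply] at hxy
      exact Matrix.mulVec_injective_of_isUnit ((Matrix.isUnit_iff_isUnit_det M).mpr hd.isUnit) hxy)
  have hK' : (0 : ℝ) < K := hK
  refine ⟨min (1 / 2) (δ / (2 * K)), by positivity, ?_⟩
  intro ε hε0 hε g hg
  have hε1 := hε.trans_le (min_le_left _ _)
  have hε2 := hε.trans_le (min_le_right _ _)
  rw [lt_div_iff₀ (by positivity)] at hε2
  have hcg := Psi14_cont g hg.1.continuous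
  set F : (Fin 4 → ℝ) → ℝ := fun x => Psi14 g (Matrix.toLin' M x) with hFdef
  have hFc : Continuous F := hcg.comp (LinearMap.continuous_of_finiteDimensional _)
  have hFs : ∀ x, F x ≠ 0 → ‖x‖ < δ := by
    intro x hx
    have h1 := Psi14_supp hε0 hε1 hg _ hx
    have h2 := hKL.le_mul_dist x 0
    rw [map_zero, dist_zero_right, dist_zero_right] at h2
    nlinarith
  have hFi : Integrable F := by
    refine hFc.integrable_of_hasCompactSupport ?_
    refine HasCompactSupport.intro (isCompact_closedBall (0 : Fin 4 → ℝ) δ) ?_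
    intro x hx
    by_contra hne
    exact hx (by simpa using (hFs x hne).le)
  have hFe : ∀ x, F (-x) = F x := by
    intro x
    simp only [hFdef, map_neg, Psi14, Pi.neg_apply, psi14_even hg]
  have step : IX2model a v δ g = M.det * ∫ x in {x : Fin 4 → ℝ | x 1 < x 2}, F x := by
    unfold IX2model
    simp only [W]
    rw [integral_const_mul]
    congr 1
    have hmE : MeasurableSet (cube4 δ ∩ {x : E4 | x 1 < x 2}) := by
      have e : ∀ i : Fin 4, Continuous fun x : E4 => x i := fun i =>
        (EuclideanSpace.proj i : E4 →L[ℝ] ℝ).continuous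
      refine MeasurableSet.inter ?_ (measurableSet_lt (e 1).measurable (e 2).measurable)
      have : cube4 δ = ⋂ i, {x : E4 | |x i| < δ} := by ext x; simp [cube4]
      rw [this]
      exact MeasurableSet.iInter fun i => measurableSet_lt (e i).abs.measurable measurable_const
    have hm : MeasurableSet {x : Fin 4 → ℝ | x 1 < x 2} :=
      measurableSet_lt (measurable_pi_apply 1) (measurable_pi_apply 2)
    rw [← integral_indicator hmE, ← integral_indicator hm,
      ← (EuclideanSpace.volume_preserving_symm_measurableEquiv_toLp (Fin 4)).integral_comp']
    refine integral_congr_ae (Eventually.of_forall fun x => ?_)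
    show _ = indicator {x : Fin 4 → ℝ | x 1 < x 2} F x.ofLp
    by_cases hx : F x.ofLp = 0
    · have : Psi14 g (Matrix.toLin' M x.ofLp) = 0 := hx
      rw [Matrix.toLin'_apply] at this
      simp [indicator, hx, this]
    · have h1 := hFs _ hx
      rw [pi_norm_lt_iff hδ] at h1
      have h2 : x ∈ cube4 δ := h1
      simp [indicator, h2, hFdef]
  rw [step, half_integral F hFi hFe, hFdef, change_var M hd _ hcg, ← hsign]
  ring

lemma combine14 (a v a' v' a'' v'' : Fin 3 → E3) (δ δ' δ'' : ℝ) (hδ : 0 < δ) (hδ' : 0 < δ')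
    (hδ'' : 0 < δ'') (s2 s3 : ℝ) (hM : IsModelTriple a v) (hM' : IsModelTriple a' v')
    (hM'' : IsModelTriple a'' v'')
    (e2 : s2 = Real.sign (cross2 (v 1) (v 0))) (e3 : s3 = Real.sign (cross2 (v 1) (v 2)))
    (e2' : -s2 = Real.sign (cross2 (v' 1) (v' 0))) (e3' : -s3 = Real.sign (cross2 (v' 1) (v' 2)))
    (e2'' : -s2 = Real.sign (cross2 (v'' 1) (v'' 0)))
    (e3'' : -s3 = Real.sign (cross2 (v'' 1) (v'' 2))) :
    ∃ ε₀ > (0 : ℝ), ∀ ε : ℝ, 0 < ε → ε < ε₀ → ∀ g : E3 → ℝ, IsEtaForm ε g →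
        IX2model a v δ g = IX2model a' v' δ' g ∧
        IX2model a v δ g = IX2model a'' v'' δ'' g := by
  obtain ⟨p, hp, H⟩ := key14 a v δ hδ hM
  obtain ⟨p', hp', H'⟩ := key14 a' v' δ' hδ' hM'
  obtain ⟨p'', hp'', H''⟩ := key14 a'' v'' δ'' hδ'' hM''
  refine ⟨min p (min p' p''), by positivity, ?_⟩
  intro ε h0 hε g hg
  simp only [lt_min_iff] at hε
  rw [H ε h0 hε.1 g hg, H' ε h0 hε.2.1 g hg, H'' ε h0 hε.2.2 g hg, ← e2, ← e3, ← e2', ← e3',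
    ← e2'', ← e3'']
  constructor <;> ring

/-- symmetries of the model integrals `I_X^{(X′₂,*)}`, `* = l, r`.
For all signs `s₁, s₂, s₃ ∈ {+1, -1}` and both `* = l` (models of type `←`) and `* = r`
(models of type `→`), the model triple-point integrals satisfy
`I_X^{(X′₂,*),s₁,s₂,s₃} = I_X^{(X′₂,*),s₁,-s₂,-s₃} = I_X^{(X′₂,*),-s₁,-s₂,-s₃}`. -/
theorem statement14 (s1 s2 s3 : ℝ) (h1 : s1 = 1 ∨ s1 = -1) (h2 : s2 = 1 ∨ s2 = -1)
    (h3 : s3 = 1 ∨ s3 = -1) :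
    (∀ (a v a' v' a'' v'' : Fin 3 → E3) (δ δ' δ'' : ℝ), 0 < δ → 0 < δ' → 0 < δ'' →
      ModelLeft a v s1 s2 s3 → ModelLeft a' v' s1 (-s2) (-s3) →
      ModelLeft a'' v'' (-s1) (-s2) (-s3) →
      ∃ ε₀ > (0 : ℝ), ∀ ε : ℝ, 0 < ε → ε < ε₀ → ∀ g : E3 → ℝ, IsEtaForm ε g →
        IX2model a v δ g = IX2model a' v' δ' g ∧
        IX2model a v δ g = IX2model a'' v'' δ'' g) ∧
    (∀ (a v a' v' a'' v'' : Fin 3 → E3) (δ δ' δ'' : ℝ), 0 < δ → 0 < δ' → 0 < δ'' →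
      ModelRight a v s1 s2 s3 → ModelRight a' v' s1 (-s2) (-s3) →
      ModelRight a'' v'' (-s1) (-s2) (-s3) →
      ∃ ε₀ > (0 : ℝ), ∀ ε : ℝ, 0 < ε → ε < ε₀ → ∀ g : E3 → ℝ, IsEtaForm ε g →
        IX2model a v δ g = IX2model a' v' δ' g ∧
        IX2model a v δ g = IX2model a'' v'' δ'' g) := by
  constructor
  · intro a v a' v' a'' v'' δ δ' δ'' hδ hδ' hδ'' M M' M''
    exact combine14 a v a' v' a'' v'' δ δ' δ'' hδ hδ' hδ'' s2 s3 M.1 M'.1 M''.1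
      M.2.2.2.1 M.2.2.2.2 M'.2.2.2.1 M'.2.2.2.2 M''.2.2.2.1 M''.2.2.2.2
  · intro a v a' v' a'' v'' δ δ' δ'' hδ hδ' hδ'' M M' M''
    exact combine14 a v a' v' a'' v'' δ δ' δ'' hδ hδ' hδ'' s2 s3 M.1 M'.1 M''.1
      M.2.2.2.1 M.2.2.2.2 M'.2.2.2.1 M'.2.2.2.2 M''.2.2.2.1 M''.2.2.2.2

end
end

section
/- For every model triple point and all sufficiently small ε > 0, I_X^{X′₁, +,+,+} + I_X^{(X′₂,l), +,+,+} = 1 and I_X^{X′₁, +,−,−} + I_X^{(X′₂,l), +,−,−} = 0. -/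
open MeasureTheory Filter Topology Set

noncomputable section

@[simp] lemma aux_mk3_0 (x y z : ℝ) : mk3 x y z 0 = x := rfl
@[simp] lemma aux_mk3_1 (x y z : ℝ) : mk3 x y z 1 = y := rfl
@[simp] lemma aux_mk3_2 (x y z : ℝ) : mk3 x y z 2 = z := rfl

lemma aux_ext3 {u v : E3} (h0 : u 0 = v 0) (h1 : u 1 = v 1) (h2 : u 2 = v 2) : u = v := by
  ext i; fin_cases i <;> assumption

/-- the density of `η` in the gnomonic chart -/
def auxq (g : E3 → ℝ) (u : Fin 2 → ℝ) : ℝ :=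
  g (unitv (mk3 (u 0) (u 1) 1)) * (‖mk3 (u 0) (u 1) 1‖ ^ 3)⁻¹

/-- the linear chart -/
def auxM (a b : E3) (H : ℝ) : Matrix (Fin 2) (Fin 2) ℝ :=
  !![-(a 0) / H, b 0 / H; -(a 1) / H, b 1 / H]

lemma auxM_det (a b : E3) (H : ℝ) : (auxM a b H).det = cross2 b a / H ^ 2 := by
  simp only [auxM, Matrix.det_fin_two_of, cross2]; ring

lemma aux_unitv_smul {r : ℝ} (hr : 0 < r) (v : E3) : unitv (r • v) = unitv v := by
  unfold unitv
  rw [norm_smul, Real.norm_of_nonneg hr.le, smul_smul, mul_inv, mul_assoc, mul_comm (‖v‖⁻¹),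
    ← mul_assoc, inv_mul_cancel₀ hr.ne', one_mul]

lemma aux_fderiv_unitv {u : E3} (hu : u ≠ 0) :
    ∃ c : E3 → ℝ, DifferentiableAt ℝ unitv u ∧
      ∀ w, fderiv ℝ unitv u w = ‖u‖⁻¹ • w + c w • u := by
  have h1 : DifferentiableAt ℝ (fun v : E3 => ‖v‖⁻¹) u :=
    (DifferentiableAt.norm ℝ differentiableAt_id hu).inv (norm_ne_zero_iff.2 hu)
  have h2 := h1.hasFDerivAt.smul (hasFDerivAt_id (𝕜 := ℝ) u)
  have h3 : HasFDerivAt unitv _ u := h2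
  refine ⟨fun w => fderiv ℝ (fun v : E3 => ‖v‖⁻¹) u w, h3.differentiableAt, fun w => ?_⟩
  rw [h3.fderiv]
  simp

lemma aux_det3 (u w w' : E3) (r c c' : ℝ) :
    det3 (r • u) (r • w + c • u) (r • w' + c' • u) = r ^ 3 * det3 u w w' := by
  simp only [det3, PiLp.add_apply, PiLp.smul_apply, smul_eq_mul]; ring

/-- Kronecker symbol -/
def auxd (i j : Fin 4) : ℤ := if i = j then 1 else 0

lemma aux_form2 (g : E3 → ℝ) (A a b : E3) (h0 : A 0 = 0) (h1 : A 1 = 0) (h2 : 0 < A 2)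
    (ha : a 2 = 0) (hb : b 2 = 0) (i j : Fin 4) (hij : i ≠ j) (x : E4) (k l : Fin 4) :
    form2 g (fun x : E4 => unitv (A + x j • b - x i • a)) x k l =
      (cross2 b a / (A 2) ^ 2 * auxq g ((auxM a b (A 2)).mulVec ![x i, x j])) *
        ((auxd k i * auxd l j - auxd k j * auxd l i : ℤ) : ℝ) := by
  set H := A 2 with hH
  set u : E3 := A + x j • b - x i • a with hu
  have hu2 : u 2 = H := by simp [hu, ha, hb, hH]
  have hune : u ≠ 0 := by
    intro h; rw [h] at hu2; simp at hu2; linarith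
  obtain ⟨c, hd, hc⟩ := aux_fderiv_unitv hune
  have hL : HasFDerivAt (fun x : E4 => A + x j • b - x i • a)
      ((EuclideanSpace.proj j : E4 →L[ℝ] ℝ).smulRight b -
        (EuclideanSpace.proj i : E4 →L[ℝ] ℝ).smulRight a) x := by
    have e1 := ((EuclideanSpace.proj j : E4 →L[ℝ] ℝ).smulRight b).hasFDerivAt (x := x)
    have e2 := ((EuclideanSpace.proj i : E4 →L[ℝ] ℝ).smulRight a).hasFDerivAt (x := x)
    have := (e1.const_add A).sub e2
    exact this
  have hp : ∀ k, pdv (fun x : E4 => unitv (A + x j • b - x i • a)) k x =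
      ‖u‖⁻¹ • ((auxd k j : ℝ) • b - (auxd k i : ℝ) • a) +
        c ((auxd k j : ℝ) • b - (auxd k i : ℝ) • a) • u := by
    intro k
    unfold pdv
    have := HasFDerivAt.comp x (show HasFDerivAt unitv (fderiv ℝ unitv u) _ from hd.hasFDerivAt) hL
    have h3 : HasFDerivAt (fun x : E4 => unitv (A + x j • b - x i • a)) _ x := this
    rw [h3.fderiv, ← hc]
    simp [auxd, eq_comm]
  have huH : u = H • mk3 ((auxM a b H).mulVec ![x i, x j] 0) ((auxM a b H).mulVec ![x i, x j] 1) 1 := by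
    apply aux_ext3
    · simp [hu, auxM, h0, Matrix.mulVec, dotProduct, Fin.sum_univ_two]; field_simp; ring
    · simp [hu, auxM, h1, Matrix.mulVec, dotProduct, Fin.sum_univ_two]; field_simp; ring
    · simp [hu2]
  unfold form2
  rw [hp, hp]
  simp only [← hu]
  rw [show unitv u = ‖u‖⁻¹ • u from rfl, aux_det3, show ‖u‖⁻¹ • u = unitv u from rfl, auxq]
  have hdet : det3 u ((auxd k j : ℝ) • b - (auxd k i : ℝ) • a)
      ((auxd l j : ℝ) • b - (auxd l i : ℝ) • a) = H * cross2 b a *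
        ((auxd k i * auxd l j - auxd k j * auxd l i : ℤ) : ℝ) := by
    simp only [det3, cross2, PiLp.sub_apply, PiLp.smul_apply, smul_eq_mul, ha, hb, hu2]
    push_cast; ring
  rw [hdet]
  generalize mk3 ((auxM a b H).mulVec ![x i, x j] 0) ((auxM a b H).mulVec ![x i, x j] 1) 1 = p at huH ⊢
  rw [huH, aux_unitv_smul h2, norm_smul, Real.norm_of_nonneg h2.le]
  field_simp

lemma aux_perm : (∑ σ : Equiv.Perm (Fin 4), (Equiv.Perm.sign σ : ℤ) *
    (auxd (σ 0) 0 * auxd (σ 1) 2 - auxd (σ 0) 2 * auxd (σ 1) 0) *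
    (auxd (σ 2) 1 * auxd (σ 3) 3 - auxd (σ 2) 3 * auxd (σ 3) 1)) = -4 := by
  simp only [auxd]; decide

lemma aux_wedge (g : E3 → ℝ) (A a b : E3) (h0 : A 0 = 0) (h1 : A 1 = 0) (h2 : 0 < A 2)
    (ha : a 2 = 0) (hb : b 2 = 0) (B c d : E3) (h0' : B 0 = 0) (h1' : B 1 = 0) (h2' : 0 < B 2)
    (hc : c 2 = 0) (hd : d 2 = 0) (x : E4) :
    wedge22 g (fun x : E4 => unitv (A + x 2 • b - x 0 • a))
      (fun x : E4 => unitv (B + x 3 • d - x 1 • c)) x =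
      - ((cross2 b a / (A 2) ^ 2 * auxq g ((auxM a b (A 2)).mulVec ![x 0, x 2])) *
      (cross2 d c / (B 2) ^ 2 * auxq g ((auxM c d (B 2)).mulVec ![x 1, x 3]))) := by
  unfold wedge22
  simp only [aux_form2 g A a b h0 h1 h2 ha hb 0 2 (by decide),
    aux_form2 g B c d h0' h1' h2' hc hd 1 3 (by decide)]
  set P := (cross2 b a / (A 2) ^ 2 * auxq g ((auxM a b (A 2)).mulVec ![x 0, x 2]))
  set Q := (cross2 d c / (B 2) ^ 2 * auxq g ((auxM c d (B 2)).mulVec ![x 1, x 3]))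
  have := congrArg (fun n : ℤ => (n : ℝ)) aux_perm
  simp only [Int.cast_sum, Int.cast_mul] at this
  have e : ∀ (s m n : ℝ), s * (P * m) * (Q * n) = (P * Q) * (s * m * n) := by intros; ring
  simp only [e]
  rw [← Finset.mul_sum, this]
  push_cast; ring

/-- coordinates on `ℝ³` -/
def auxe3 : ((Fin 2 → ℝ) × ℝ) ≃ᵐ E3 where
  toFun p := mk3 (p.1 0) (p.1 1) p.2
  invFun v := (![v 0, v 1], v 2)
  left_inv p := by
    ext i
    · fin_cases i <;> rfl
    · rfl
  right_inv v := by
    apply aux_ext3 <;> rfl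
  measurable_toFun := by
    refine (PiLp.volume_preserving_toLp (Fin 3)).measurable.comp
      (g := @WithLp.toLp 2 (Fin 3 → ℝ)) (f := fun p : (Fin 2 → ℝ) × ℝ => ![p.1 0, p.1 1, p.2]) ?_
    refine measurable_pi_iff.2 fun i => ?_
    fin_cases i <;> simp <;> fun_prop
  measurable_invFun := by
    refine Measurable.prodMk (measurable_pi_iff.2 fun i => ?_) (by simp; fun_prop)
    fin_cases i <;> simp <;> fun_prop

lemma auxe3_mp : MeasurePreserving auxe3 := by
  have h : MeasurePreserving (fun p : (Fin 2 → ℝ) × ℝ => (![p.1 0, p.1 1, p.2] : Fin 3 → ℝ)) := by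
    have hm : Measurable (fun p : (Fin 2 → ℝ) × ℝ => (![p.1 0, p.1 1, p.2] : Fin 3 → ℝ)) := by
      refine measurable_pi_iff.2 fun i => ?_
      fin_cases i <;> simp <;> fun_prop
    refine ⟨hm, (Measure.pi_eq fun s hs => ?_).symm⟩
    rw [Measure.map_apply hm (MeasurableSet.univ_pi hs)]
    have : (fun p : (Fin 2 → ℝ) × ℝ => (![p.1 0, p.1 1, p.2] : Fin 3 → ℝ)) ⁻¹' (pi univ s) =
        (pi univ ![s 0, s 1]) ×ˢ s 2 := by
      ext p; simp [Fin.forall_fin_succ, and_assoc]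
    rw [this, Measure.volume_eq_prod, Measure.prod_prod, volume_pi_pi]
    simp [Fin.prod_univ_succ, mul_assoc]
  exact (PiLp.volume_preserving_toLp (Fin 3)).comp h

/-- coordinates on `ℝ⁴` -/
def auxe4 : ((Fin 2 → ℝ) × (Fin 2 → ℝ)) ≃ᵐ E4 where
  toFun p := WithLp.toLp 2 ![p.1 0, p.2 0, p.1 1, p.2 1]
  invFun v := (![v 0, v 2], ![v 1, v 3])
  left_inv p := by
    ext i <;> fin_cases i <;> rfl
  right_inv v := by
    ext i; fin_cases i <;> rfl
  measurable_toFun := by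
    refine (PiLp.volume_preserving_toLp (Fin 4)).measurable.comp
      (g := @WithLp.toLp 2 (Fin 4 → ℝ))
      (f := fun p : (Fin 2 → ℝ) × (Fin 2 → ℝ) => ![p.1 0, p.2 0, p.1 1, p.2 1]) ?_
    refine measurable_pi_iff.2 fun i => ?_
    fin_cases i <;> simp <;> fun_prop
  measurable_invFun := by
    refine Measurable.prodMk (measurable_pi_iff.2 fun i => ?_) (measurable_pi_iff.2 fun i => ?_) <;>
    fin_cases i <;> simp <;> fun_prop

lemma auxe4_mp : MeasurePreserving auxe4 := by
  have h : MeasurePreserving (fun p : (Fin 2 → ℝ) × (Fin 2 → ℝ) =>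
      (![p.1 0, p.2 0, p.1 1, p.2 1] : Fin 4 → ℝ)) := by
    have hm : Measurable (fun p : (Fin 2 → ℝ) × (Fin 2 → ℝ) =>
      (![p.1 0, p.2 0, p.1 1, p.2 1] : Fin 4 → ℝ)) := by
      refine measurable_pi_iff.2 fun i => ?_
      fin_cases i <;> simp <;> fun_prop
    refine ⟨hm, (Measure.pi_eq fun s hs => ?_).symm⟩
    rw [Measure.map_apply hm (MeasurableSet.univ_pi hs)]
    have : (fun p : (Fin 2 → ℝ) × (Fin 2 → ℝ) =>
      (![p.1 0, p.2 0, p.1 1, p.2 1] : Fin 4 → ℝ)) ⁻¹' (pi univ s) =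
        (pi univ ![s 0, s 2]) ×ˢ (pi univ ![s 1, s 3]) := by
      ext p; simp [Fin.forall_fin_succ]; tauto
    rw [this, Measure.volume_eq_prod, Measure.prod_prod, volume_pi_pi, volume_pi_pi]
    simp [Fin.prod_univ_succ]; ring
  exact (PiLp.volume_preserving_toLp (Fin 4)).comp h

lemma aux_supp {ε : ℝ} (hε : ε ≤ 1 / 2) {v : E3} (hv : ‖unitv v - NP‖ < ε) :
    0 < v 2 ∧ |v 0| < 2 * ε * v 2 ∧ |v 1| < 2 * ε * v 2 := by
  have hc : ∀ i, |(unitv v - NP) i| < ε := fun i =>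
    lt_of_le_of_lt (by simpa using PiLp.norm_apply_le (unitv v - NP) i) hv
  have e0 := hc 0
  have e1 := hc 1
  have e2 := hc 2
  simp only [unitv, NP, PiLp.sub_apply, PiLp.smul_apply, smul_eq_mul, aux_mk3_0, aux_mk3_1,
    aux_mk3_2, sub_zero] at e0 e1 e2
  have hn : 0 ≤ ‖v‖⁻¹ := by positivity
  rw [abs_lt] at e2
  have hp : 1 / 2 < ‖v‖⁻¹ * v 2 := by linarith
  have hpos : 0 < ‖v‖⁻¹ := by
    rcases hn.eq_or_lt with h | h
    · rw [← h] at hp; norm_num at hp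
    · exact h
  have hv2 : 0 < v 2 := by
    by_contra h
    have := mul_nonneg hn (by linarith : 0 ≤ - v 2)
    linarith
  rw [abs_mul, abs_of_pos hpos] at e0 e1
  have key : ∀ t, ‖v‖⁻¹ * t < ε → t < 2 * ε * v 2 := by
    intro t ht
    have hε0 : 0 < ε := lt_of_le_of_lt (norm_nonneg _) hv
    have : ‖v‖⁻¹ * t < ‖v‖⁻¹ * (2 * ε * v 2) := by nlinarith
    exact lt_of_mul_lt_mul_left this hn
  exact ⟨hv2, key _ e0, key _ e1⟩

lemma aux_norm_unitv {v : E3} (hv : v ≠ 0) : ‖unitv v‖ = 1 := by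
  unfold unitv
  rw [norm_smul, norm_inv, norm_norm, inv_mul_cancel₀ (norm_ne_zero_iff.2 hv)]

lemma aux_mk3_ne (u0 u1 : ℝ) : mk3 u0 u1 1 ≠ 0 := by
  intro h
  have := congrArg (fun v : E3 => v 2) h
  simp at this

lemma aux_one_le (u0 u1 : ℝ) : 1 ≤ ‖mk3 u0 u1 1‖ := by
  simpa using PiLp.norm_apply_le (mk3 u0 u1 1) 2

lemma auxq_supp {ε : ℝ} (hε : ε ≤ 1 / 2) {g : E3 → ℝ} (hg : IsEtaForm ε g) {u : Fin 2 → ℝ}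
    (hu : auxq g u ≠ 0) (i : Fin 2) : |u i| < 2 * ε := by
  have h1 : g (unitv (mk3 (u 0) (u 1) 1)) ≠ 0 := by
    intro h; apply hu; simp [auxq, h]
  have := aux_supp hε (hg.2.1 _ (aux_norm_unitv (aux_mk3_ne _ _)) h1)
  simp at this
  fin_cases i
  · exact this.1
  · exact this.2

lemma auxq_even {ε : ℝ} {g : E3 → ℝ} (hg : IsEtaForm ε g) (u : Fin 2 → ℝ) :
    auxq g (-u) = auxq g u := by
  have hn : ‖mk3 (-u 0) (-u 1) 1‖ = ‖mk3 (u 0) (u 1) 1‖ := by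
    simp [EuclideanSpace.norm_eq, Fin.sum_univ_three]
  have h := hg.2.2.1 (-1) (by simp) _ (aux_norm_unitv (aux_mk3_ne (u 0) (u 1)))
  have e : act2 (-1) (unitv (mk3 (u 0) (u 1) 1)) = unitv (mk3 (-u 0) (-u 1) 1) := by
    apply aux_ext3 <;> simp [act2, unitv, hn]
  rw [e] at h
  simp only [auxq, Pi.neg_apply, hn, h]

lemma auxq_cont {ε : ℝ} {g : E3 → ℝ} (hg : IsEtaForm ε g) : Continuous (auxq g) := by
  have hm : Continuous (fun u : Fin 2 → ℝ => mk3 (u 0) (u 1) 1) := by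
    refine (PiLp.continuous_toLp 2 (fun _ : Fin 3 => ℝ)).comp
      (g := @WithLp.toLp 2 (Fin 3 → ℝ)) (f := fun u : Fin 2 → ℝ => ![u 0, u 1, 1]) ?_
    refine continuous_pi fun i => ?_
    fin_cases i <;> simp <;> fun_prop
  have hne : ∀ u : Fin 2 → ℝ, ‖mk3 (u 0) (u 1) 1‖ ≠ 0 := fun u =>
    norm_ne_zero_iff.2 (aux_mk3_ne _ _)
  unfold auxq unitv
  refine (hg.1.continuous.comp ((hm.norm.inv₀ hne).smul hm)).mul
    ((hm.norm.pow 3).inv₀ fun u => pow_ne_zero _ (hne u))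

lemma auxq_integrable {ε : ℝ} (hε : ε ≤ 1 / 2) {g : E3 → ℝ} (hg : IsEtaForm ε g) :
    Integrable (auxq g) := by
  refine (auxq_cont hg).integrable_of_hasCompactSupport
    (HasCompactSupport.intro (isCompact_closedBall (0 : Fin 2 → ℝ) 1) fun u hu => ?_)
  by_contra h
  apply hu
  rw [mem_closedBall_zero_iff, pi_norm_le_iff_of_nonneg zero_le_one]
  intro i
  have := auxq_supp hε hg h i
  rw [Real.norm_eq_abs]; linarith

lemma aux_gamma : ∫ r in Ioi (0 : ℝ), r ^ 2 * Real.exp (-r) = 2 := by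
  have h := Real.Gamma_eq_integral (s := 3) (by norm_num)
  have h2 : Real.Gamma 3 = 2 := by norm_num
  rw [h2] at h
  rw [h]
  refine setIntegral_congr_fun measurableSet_Ioi fun x hx => ?_
  rw [show (3 : ℝ) - 1 = (2 : ℕ) by norm_num, Real.rpow_natCast]; ring

lemma aux_polar (g : E3 → ℝ) :
    ∫ x : E3, g (unitv x) * Real.exp (-‖x‖) =
      (∫ v : Metric.sphere (0 : E3) 1, g v ∂((volume : Measure E3).toSphere)) * 2 := by
  calc
    ∫ x : E3, g (unitv x) * Real.exp (-‖x‖) =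
        ∫ x : ({(0)}ᶜ : Set E3), g (unitv x.1) * Real.exp (-‖x.1‖)
          ∂((volume : Measure E3).comap (↑)) := by
      rw [integral_subtype_comap (measurableSet_singleton _).compl
        fun x : E3 ↦ g (unitv x) * Real.exp (-‖x‖), restrict_compl_singleton]
    _ = ∫ x, g x.1 * Real.exp (-(x.2 : ℝ))
        ∂(volume : Measure E3).toSphere.prod (.volumeIoiPow (Module.finrank ℝ E3 - 1)) := by
      simpa [unitv] using (volume : Measure E3).measurePreserving_homeomorphUnitSphereProd.integral_comp
        (Homeomorph.measurableEmbedding _)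
        (fun x : Metric.sphere (0 : E3) 1 × Ioi (0 : ℝ) => g x.1 * Real.exp (-(x.2 : ℝ)))
    _ = (∫ v : Metric.sphere (0 : E3) 1, g v ∂((volume : Measure E3).toSphere)) *
        ∫ x : Ioi (0 : ℝ), Real.exp (-(x : ℝ)) ∂.volumeIoiPow (Module.finrank ℝ E3 - 1) :=
      integral_prod_mul (fun v : Metric.sphere (0 : E3) 1 => g v)
        (fun x : Ioi (0 : ℝ) => Real.exp (-(x : ℝ)))
    _ = _ := by
      congr 1
      rw [← aux_gamma]
      simp only [Measure.volumeIoiPow, ENNReal.ofReal]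
      rw [integral_withDensity_eq_integral_smul,
        integral_subtype_comap measurableSet_Ioi
          fun a ↦ Real.toNNReal (a ^ (Module.finrank ℝ E3 - 1)) • Real.exp (-a),
        setIntegral_congr_fun measurableSet_Ioi fun x hx ↦ ?_]
      · rw [NNReal.smul_def, Real.coe_toNNReal _ (pow_nonneg hx.out.le _)]
        simp
      · exact (measurable_subtype_coe.pow_const _).real_toNNReal

lemma auxq_integral {ε : ℝ} (hε : ε ≤ 1 / 2) {g : E3 → ℝ} (hg : IsEtaForm ε g) :
    ∫ u, auxq g u = 1 := by
  set G : E3 → ℝ := fun x => g (unitv x) * Real.exp (-‖x‖) with hG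
  have h1 : ∫ x, G x = 2 := by rw [aux_polar, hg.2.2.2, one_mul]
  have h2 : ∫ p, G (auxe3 p) = 2 := by
    rw [auxe3_mp.integral_comp auxe3.measurableEmbedding, h1]
  have hint : Integrable (fun p => G (auxe3 p)) :=
    Integrable.of_integral_ne_zero (by rw [h2]; norm_num)
  rw [Measure.volume_eq_prod] at hint
  rw [Measure.volume_eq_prod, integral_prod_symm _ hint] at h2
  -- negative heights do not contribute
  have hneg : ∀ z : ℝ, z ∉ Ioi (0 : ℝ) → ∫ w : Fin 2 → ℝ, G (auxe3 (w, z)) = 0 := by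
    intro z hz
    rw [← integral_zero (Fin 2 → ℝ) ℝ (μ := volume)]
    by_cases hz0 : z = 0
    · subst hz0
      refine integral_congr_ae ?_
      have : ∀ᵐ w : Fin 2 → ℝ, w ≠ 0 := by
        simp [ae_iff, measure_singleton]
      filter_upwards [this] with w hw
      by_contra h
      have hne : auxe3 (w, 0) ≠ 0 := by
        intro h'
        apply hw
        ext i
        fin_cases i
        · exact congrArg (fun v : E3 => v 0) h'
        · exact congrArg (fun v : E3 => v 1) h'
      have hgn : g (unitv (auxe3 (w, 0))) ≠ 0 := fun h' => h (by simp [hG, h'])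
      have := (aux_supp hε (hg.2.1 _ (aux_norm_unitv hne) hgn)).1
      exact lt_irrefl _ this
    · refine integral_congr_ae (Eventually.of_forall fun w => ?_)
      by_contra h
      have hne : auxe3 (w, z) ≠ 0 := by
        intro h'
        exact hz0 (congrArg (fun v : E3 => v 2) h')
      have hgn : g (unitv (auxe3 (w, z))) ≠ 0 := fun h' => h (by simp [hG, h'])
      have := (aux_supp hε (hg.2.1 _ (aux_norm_unitv hne) hgn)).1
      exact hz this
  rw [← setIntegral_eq_integral_of_forall_compl_eq_zero hneg] at h2
  have hpos : ∀ z ∈ Ioi (0 : ℝ), ∫ w : Fin 2 → ℝ, G (auxe3 (w, z)) =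
      ∫ u : Fin 2 → ℝ, z ^ 2 * (g (unitv (mk3 (u 0) (u 1) 1)) *
        Real.exp (-(z * ‖mk3 (u 0) (u 1) 1‖))) := by
    intro z hz
    have hz' : 0 < z := hz
    have := Measure.integral_comp_smul_of_nonneg (volume : Measure (Fin 2 → ℝ))
      (fun w : Fin 2 → ℝ => G (auxe3 (w, z))) z (hR := hz'.le)
    simp only [Module.finrank_fin_fun, smul_eq_mul] at this
    rw [integral_const_mul]
    have e : ∀ u : Fin 2 → ℝ, G (auxe3 (z • u, z)) = g (unitv (mk3 (u 0) (u 1) 1)) *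
        Real.exp (-(z * ‖mk3 (u 0) (u 1) 1‖)) := by
      intro u
      have : auxe3 (z • u, z) = z • mk3 (u 0) (u 1) 1 := by
        apply aux_ext3
        · rfl
        · rfl
        · change z = z * 1
          ring
      rw [this, hG]
      simp only []
      rw [aux_unitv_smul hz', norm_smul, Real.norm_of_nonneg hz'.le]
    simp only [e] at this
    rw [this]
    field_simp
  rw [setIntegral_congr_fun measurableSet_Ioi hpos] at h2
  have hqi := auxq_integrable hε hg
  have hexp : IntegrableOn (fun z : ℝ => z ^ 2 * Real.exp (-z)) (Ioi 0) :=
    Integrable.of_integral_ne_zero (by rw [aux_gamma]; norm_num)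
  have hqe : ∀ (z : ℝ) (u : Fin 2 → ℝ), z ^ 2 * (g (unitv (mk3 (u 0) (u 1) 1)) *
        Real.exp (-(z * ‖mk3 (u 0) (u 1) 1‖))) =
      auxq g u * ((z * ‖mk3 (u 0) (u 1) 1‖) ^ 2 * Real.exp (-(z * ‖mk3 (u 0) (u 1) 1‖)) *
        ‖mk3 (u 0) (u 1) 1‖) := by
    intro z u
    have : ‖mk3 (u 0) (u 1) 1‖ ≠ 0 := norm_ne_zero_iff.2 (aux_mk3_ne _ _)
    unfold auxq
    field_simp
  have hcm : Continuous (fun u : Fin 2 → ℝ => mk3 (u 0) (u 1) 1) := by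
    refine (PiLp.continuous_toLp 2 (fun _ : Fin 3 => ℝ)).comp
      (g := @WithLp.toLp 2 (Fin 3 → ℝ)) (f := fun u : Fin 2 → ℝ => ![u 0, u 1, 1]) ?_
    refine continuous_pi fun i => ?_
    fin_cases i <;> simp <;> fun_prop
  have hqc := auxq_cont hg
  -- domination: `g` itself is integrable in the chart, as `g = auxq g * N ^ 3`
  have hgi : Integrable (fun u : Fin 2 → ℝ => auxq g u * ‖mk3 (u 0) (u 1) 1‖ ^ 3) := by
    refine (hqc.mul (hcm.norm.pow 3)).integrable_of_hasCompactSupport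
      (HasCompactSupport.intro (isCompact_closedBall (0 : Fin 2 → ℝ) 1) fun u hu => ?_)
    by_contra h
    apply hu
    rw [mem_closedBall_zero_iff, pi_norm_le_iff_of_nonneg zero_le_one]
    intro i
    have := auxq_supp hε hg (left_ne_zero_of_mul h) i
    rw [Real.norm_eq_abs]; linarith
  have hdom := Integrable.mul_prod hexp hgi
  have hswap : Integrable (fun p : ℝ × (Fin 2 → ℝ) => p.1 ^ 2 *
      (g (unitv (mk3 (p.2 0) (p.2 1) 1)) * Real.exp (-(p.1 * ‖mk3 (p.2 0) (p.2 1) 1‖))))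
      ((volume.restrict (Ioi 0)).prod volume) := by
    refine hdom.mono ?_ ?_
    · simp only [hqe]
      apply Continuous.aestronglyMeasurable
      have c2 := hqc.comp (continuous_snd (X := ℝ) (Y := Fin 2 → ℝ))
      have c3 := hcm.norm.comp (continuous_snd (X := ℝ) (Y := Fin 2 → ℝ))
      have c4 := (continuous_fst (X := ℝ) (Y := Fin 2 → ℝ)).mul c3
      exact c2.mul (((c4.pow 2).mul c4.neg.rexp).mul c3)
    · have hz : ∀ᵐ p : ℝ × (Fin 2 → ℝ) ∂((volume.restrict (Ioi 0)).prod volume), p.1 ∈ Ioi (0 : ℝ) :=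
        Measure.quasiMeasurePreserving_fst.ae (ae_restrict_mem measurableSet_Ioi)
      filter_upwards [hz] with p hp
      have hp' : 0 < p.1 := hp
      have hN := aux_one_le (p.2 0) (p.2 1)
      have hgq : auxq g p.2 * ‖mk3 (p.2 0) (p.2 1) 1‖ ^ 3 = g (unitv (mk3 (p.2 0) (p.2 1) 1)) := by
        unfold auxq
        field_simp
      rw [hgq]
      simp only [norm_mul, Real.norm_eq_abs, Real.abs_exp]
      have : Real.exp (-(p.1 * ‖mk3 (p.2 0) (p.2 1) 1‖)) ≤ Real.exp (-p.1) := by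
        apply Real.exp_le_exp.2; nlinarith
      calc _ ≤ |p.1 ^ 2| * (|g (unitv (mk3 (p.2 0) (p.2 1) 1))| * Real.exp (-p.1)) := by gcongr
        _ = _ := by ring
  rw [integral_integral_swap hswap] at h2
  have hin : ∀ u : Fin 2 → ℝ, ∫ z in Ioi (0 : ℝ), z ^ 2 * (g (unitv (mk3 (u 0) (u 1) 1)) *
        Real.exp (-(z * ‖mk3 (u 0) (u 1) 1‖))) = auxq g u * 2 := by
    intro u
    have hN : 0 < ‖mk3 (u 0) (u 1) 1‖ := lt_of_lt_of_le one_pos (aux_one_le _ _)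
    simp only [hqe]
    rw [integral_const_mul, integral_mul_const,
      integral_comp_mul_right_Ioi (fun r => r ^ 2 * Real.exp (-r)) 0 hN, zero_mul, aux_gamma]
    simp only [smul_eq_mul]
    field_simp
  simp only [hin] at h2
  rw [integral_mul_const] at h2
  linarith

lemma aux_chart {ε : ℝ} (hε : ε ≤ 1 / 2) {g : E3 → ℝ} (hg : IsEtaForm ε g)
    {M : Matrix (Fin 2) (Fin 2) ℝ} (hM : M.det ≠ 0) :
    ∫ t : Fin 2 → ℝ, auxq g (M.mulVec t) = |M.det⁻¹| := by
  have h := Real.map_matrix_volume_pi_eq_smul_volume_pi hM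
  have h2 : ∫ u, auxq g u ∂(Measure.map (Matrix.toLin' M) volume) =
      ∫ t : Fin 2 → ℝ, auxq g (Matrix.toLin' M t) :=
    integral_map (LinearMap.continuous_of_finiteDimensional _).measurable.aemeasurable
      (auxq_cont hg).aestronglyMeasurable
  rw [h, integral_smul_measure, auxq_integral hε hg] at h2
  simp only [Matrix.toLin'_apply] at h2
  rw [← h2, ENNReal.toReal_ofReal (abs_nonneg _)]
  simp

lemma aux_small (M : Matrix (Fin 2) (Fin 2) ℝ) (hM : M.det ≠ 0) {δ : ℝ} (hδ : 0 < δ) :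
    ∃ ρ > (0 : ℝ), ∀ t : Fin 2 → ℝ, (∀ i, |M.mulVec t i| < ρ) → ∀ i, |t i| < δ := by
  have hc : Continuous (fun u : Fin 2 → ℝ => M⁻¹.mulVec u) :=
    (LinearMap.continuous_of_finiteDimensional (Matrix.toLin' M⁻¹))
  obtain ⟨ρ, hρ, h⟩ := Metric.continuous_iff.1 hc 0 δ hδ
  refine ⟨ρ, hρ, fun t ht i => ?_⟩
  have := h (M.mulVec t) (by
    rw [dist_zero_right, pi_norm_lt_iff hρ]
    simpa using ht)
  rw [Matrix.mulVec_zero, dist_zero_right, Matrix.mulVec_mulVec,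
    Matrix.nonsing_inv_mul M (isUnit_iff_ne_zero.2 hM), Matrix.one_mulVec, pi_norm_lt_iff hδ] at this
  simpa using this i

lemma aux_half {F : E4 → ℝ} (hF : Integrable F) (he : ∀ x, F (-x) = F x) {i j : Fin 4}
    (hij : i ≠ j) : ∫ x in {x : E4 | x i < x j}, F x = (∫ x, F x) / 2 := by
  have ho : MeasurableSet {x : E4 | x i < x j} := by
    apply measurableSet_lt <;> fun_prop
  have h1 : ∫ x in {x : E4 | x i < x j}, F x = ∫ x in {x : E4 | x j < x i}, F x := by
    rw [← integral_indicator ho, ← integral_neg_eq_self, ← integral_indicator (by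
      apply measurableSet_lt <;> fun_prop)]
    congr 1
    ext x
    simp [indicator, he]
  have h2 : ∫ x in {x : E4 | x i < x j}ᶜ, F x = ∫ x in {x : E4 | x j < x i}, F x := by
    apply setIntegral_congr_set
    have hnull : volume {x : E4 | x i = x j} = 0 := by
      let L : E4 →ₗ[ℝ] ℝ := (EuclideanSpace.proj i - EuclideanSpace.proj j : E4 →L[ℝ] ℝ)
      have hL : {x : E4 | x i = x j} = (LinearMap.ker L : Set E4) := by
        ext x; simp [L, sub_eq_zero]
      rw [hL]
      apply Measure.addHaar_submodule
      intro h
      have : EuclideanSpace.single i (1 : ℝ) ∈ LinearMap.ker L := by rw [h]; trivial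
      simp [L, hij.symm] at this
    have hae : ∀ᵐ x : E4, x i ≠ x j := by
      rw [ae_iff]; simpa using hnull
    filter_upwards [hae] with x hx
    apply propext
    change ¬ (x i < x j) ↔ x j < x i
    constructor
    · intro h; exact lt_of_le_of_ne (not_lt.1 h) (Ne.symm hx)
    · intro h; exact not_lt.2 h.le
  have h3 := integral_add_compl ho hF
  rw [h2, ← h1] at h3
  linarith

lemma aux_sign {c H : ℝ} (hc : c ≠ 0) (hH : 0 < H) :
    c / H ^ 2 * |(c / H ^ 2)⁻¹| = Real.sign c := by
  rw [abs_inv, abs_div, abs_of_pos (pow_pos hH 2)]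
  rcases lt_or_gt_of_ne hc with h | h
  · rw [Real.sign_of_neg h, abs_of_neg h]; field_simp
  · rw [Real.sign_of_pos h, abs_of_pos h]; field_simp

lemma aux_main (A a b : E3) (h0 : A 0 = 0) (h1 : A 1 = 0) (h2 : 0 < A 2)
    (ha : a 2 = 0) (hb : b 2 = 0) (B c d : E3) (h0' : B 0 = 0) (h1' : B 1 = 0) (h2' : 0 < B 2)
    (hc : c 2 = 0) (hd : d 2 = 0) (hba : cross2 b a ≠ 0) (hdc : cross2 d c ≠ 0)
    (δ : ℝ) (hδ : 0 < δ) (i j : Fin 4) (hij : i ≠ j) :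
    ∃ ε₀ > (0 : ℝ), ∀ ε : ℝ, 0 < ε → ε < ε₀ → ∀ g : E3 → ℝ, IsEtaForm ε g →
      ∫ x in cube4 δ ∩ {x : E4 | x i < x j},
        wedge22 g (fun x : E4 => unitv (A + x 2 • b - x 0 • a))
          (fun x : E4 => unitv (B + x 3 • d - x 1 • c)) x =
        - (Real.sign (cross2 b a) * Real.sign (cross2 d c)) / 2 := by
  set M := auxM a b (A 2) with hMdef
  set M' := auxM c d (B 2) with hMdef'
  have hM : M.det ≠ 0 := by
    rw [hMdef, auxM_det]; exact div_ne_zero hba (pow_ne_zero _ h2.ne')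
  have hM' : M'.det ≠ 0 := by
    rw [hMdef', auxM_det]; exact div_ne_zero hdc (pow_ne_zero _ h2'.ne')
  obtain ⟨ρ, hρ, hs⟩ := aux_small M hM hδ
  obtain ⟨ρ', hρ', hs'⟩ := aux_small M' hM' hδ
  refine ⟨min (1 / 2) (min (ρ / 2) (ρ' / 2)), by positivity, fun ε hε0 hε g hg => ?_⟩
  have hε1 : ε ≤ 1 / 2 := (hε.trans_le (min_le_left _ _)).le
  have hε2 : 2 * ε < ρ := by
    have := hε.trans_le ((min_le_right _ _).trans (min_le_left _ _)); linarith
  have hε3 : 2 * ε < ρ' := by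
    have := hε.trans_le ((min_le_right _ _).trans (min_le_right _ _)); linarith
  set F : E4 → ℝ := fun x => - ((cross2 b a / (A 2) ^ 2 * auxq g (M.mulVec ![x 0, x 2])) *
      (cross2 d c / (B 2) ^ 2 * auxq g (M'.mulVec ![x 1, x 3]))) with hF
  simp only [aux_wedge g A a b h0 h1 h2 ha hb B c d h0' h1' h2' hc hd]
  change ∫ x in cube4 δ ∩ {x : E4 | x i < x j}, F x = _
  have ho : MeasurableSet {x : E4 | x i < x j} := by
    apply measurableSet_lt <;> fun_prop
  rw [← setIntegral_eq_of_subset_of_forall_sdiff_eq_zero ho inter_subset_right (f := F) ?_]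
  · have I1 := aux_chart hε1 hg hM
    have I2 := aux_chart hε1 hg hM'
    have J1 : Integrable (fun t : Fin 2 → ℝ => auxq g (M.mulVec t)) :=
      Integrable.of_integral_ne_zero (by rw [I1]; simpa using hM)
    have J2 : Integrable (fun t : Fin 2 → ℝ => auxq g (M'.mulVec t)) :=
      Integrable.of_integral_ne_zero (by rw [I2]; simpa using hM')
    have hcomp : (fun p => F (auxe4 p)) = fun p : (Fin 2 → ℝ) × (Fin 2 → ℝ) =>
        -(((cross2 b a / (A 2) ^ 2) * auxq g (M.mulVec p.1)) *
          ((cross2 d c / (B 2) ^ 2) * auxq g (M'.mulVec p.2))) := by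
      funext p
      have e1 : ![(auxe4 p) 0, (auxe4 p) 2] = p.1 := by ext i; fin_cases i <;> rfl
      have e2 : ![(auxe4 p) 1, (auxe4 p) 3] = p.2 := by ext i; fin_cases i <;> rfl
      simp only [hF, e1, e2]
    have hint : Integrable F := by
      rw [← auxe4_mp.integrable_comp_emb auxe4.measurableEmbedding]
      change Integrable (fun p => F (auxe4 p))
      rw [hcomp]
      exact ((J1.const_mul _).mul_prod (J2.const_mul _)).neg
    have htot : ∫ x, F x = -(Real.sign (cross2 b a) * Real.sign (cross2 d c)) := by
      rw [← auxe4_mp.integral_comp auxe4.measurableEmbedding, hcomp, integral_neg,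
        Measure.volume_eq_prod,
        integral_prod_mul (fun t : Fin 2 → ℝ => cross2 b a / (A 2) ^ 2 * auxq g (M.mulVec t))
        (fun t : Fin 2 → ℝ => cross2 d c / (B 2) ^ 2 * auxq g (M'.mulVec t)),
        integral_const_mul, integral_const_mul, I1, I2, hMdef, hMdef', auxM_det, auxM_det,
        aux_sign hba h2, aux_sign hdc h2']
    rw [aux_half hint ?_ hij, htot]
    intro x
    have e1 : ![(-x) 0, (-x) 2] = -![x 0, x 2] := by ext i; fin_cases i <;> rfl
    have e2 : ![(-x) 1, (-x) 3] = -![x 1, x 3] := by ext i; fin_cases i <;> rfl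
    simp only [hF, e1, e2, Matrix.mulVec_neg, auxq_even hg]
  · rintro x ⟨hx1, hx2⟩
    by_contra h
    apply hx2
    refine ⟨?_, hx1⟩
    have hh := neg_ne_zero.1 h
    have k1 := right_ne_zero_of_mul (left_ne_zero_of_mul hh)
    have k2 := right_ne_zero_of_mul (right_ne_zero_of_mul hh)
    have l1 := hs _ fun i => (auxq_supp hε1 hg k1 i).trans hε2
    have l2 := hs' _ fun i => (auxq_supp hε1 hg k2 i).trans hε3
    intro i
    fin_cases i
    · exact l1 0
    · exact l2 0
    · exact l1 1
    · exact l2 1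

lemma aux_cross_swap (a b : E3) : cross2 a b = - cross2 b a := by simp only [cross2]; ring

lemma aux_model (a v : Fin 3 → E3) (δ : ℝ) (hδ : 0 < δ) (s1 s2 s3 : ℝ)
    (hm : ModelLeft a v s1 s2 s3) :
    ∃ ε₀ > (0 : ℝ), ∀ ε : ℝ, 0 < ε → ε < ε₀ → ∀ g : E3 → ℝ, IsEtaForm ε g →
        IX1model a v δ g = s1 * s2 / 2 ∧ IX2model a v δ g = s2 * s3 / 2 := by
  obtain ⟨⟨hv, -, p01, p12, hcr, z01, z21⟩, z20, e1, e2, e3⟩ := hm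
  simp only [pr12, Prod.mk.injEq] at p01 p12
  have hneg : ∀ p q : E3, cross2 (-p) (-q) = cross2 p q := by
    intro p q; simp [cross2]
  obtain ⟨ε1, hε1, H1⟩ := aux_main (a 1 - a 0) (v 0) (v 1) (by simp [p01]) (by simp [p01])
    (by simpa using z01) (hv 0) (hv 1) (a 0 - a 2) (-v 0) (-v 2) (by simp [p01, p12])
    (by simp [p01, p12]) (by simpa using z20) (by simp [hv]) (by simp [hv])
    (hcr 1 0 (by decide)) (by rw [hneg]; exact hcr 2 0 (by decide)) δ hδ 0 1 (by decide)
  obtain ⟨ε2, hε2, H2⟩ := aux_main (a 1 - a 0) (v 0) (v 1) (by simp [p01]) (by simp [p01])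
    (by simpa using z01) (hv 0) (hv 1) (a 1 - a 2) (-v 1) (-v 2) (by simp [p12])
    (by simp [p12]) (by simpa using z21) (by simp [hv]) (by simp [hv])
    (hcr 1 0 (by decide)) (by rw [hneg]; exact hcr 2 1 (by decide)) δ hδ 1 2 (by decide)
  refine ⟨min ε1 ε2, lt_min hε1 hε2, fun ε h0 hε g hg => ⟨?_, ?_⟩⟩
  · have := H1 ε h0 (hε.trans_le (min_le_left _ _)) g hg
    rw [hneg, aux_cross_swap (v 2) (v 0), Real.sign_neg, ← e1, ← e2] at this
    unfold IX1model seg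
    have k1 : ∀ x : E4, a 1 + x 2 • v 1 - (a 0 + x 0 • v 0) = a 1 - a 0 + x 2 • v 1 - x 0 • v 0 := by
      intro x; abel
    have k2 : ∀ x : E4, a 0 + x 1 • v 0 - (a 2 + x 3 • v 2) =
        a 0 - a 2 + x 3 • (-v 2) - x 1 • (-v 0) := by
      intro x; simp only [smul_neg]; abel
    simp only [k1, k2]
    rw [this]; ring
  · have := H2 ε h0 (hε.trans_le (min_le_right _ _)) g hg
    rw [hneg, aux_cross_swap (v 2) (v 1), Real.sign_neg, ← e3, ← e2] at this
    unfold IX2model seg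
    have k1 : ∀ x : E4, a 1 + x 2 • v 1 - (a 0 + x 0 • v 0) = a 1 - a 0 + x 2 • v 1 - x 0 • v 0 := by
      intro x; abel
    have k2 : ∀ x : E4, a 1 + x 1 • v 1 - (a 2 + x 3 • v 2) =
        a 1 - a 2 + x 3 • (-v 2) - x 1 • (-v 1) := by
      intro x; simp only [smul_neg]; abel
    simp only [k1, k2]
    rw [this]; ring
/-- normalization of the model integrals. For every model triple
point of type `(←, +, +, +)` and all sufficiently small `ε > 0`,
`I_X^{X′₁,+,+,+} + I_X^{(X′₂,l),+,+,+} = 1`; for every model triple point of type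
`(←, +, -, -)` and all sufficiently small `ε > 0`,
`I_X^{X′₁,+,-,-} + I_X^{(X′₂,l),+,-,-} = 0`. -/
theorem statement15 :
    (∀ (a v : Fin 3 → E3) (δ : ℝ), 0 < δ → ModelLeft a v 1 1 1 →
      ∃ ε₀ > (0 : ℝ), ∀ ε : ℝ, 0 < ε → ε < ε₀ → ∀ g : E3 → ℝ, IsEtaForm ε g →
        IX1model a v δ g + IX2model a v δ g = 1) ∧
    (∀ (a v : Fin 3 → E3) (δ : ℝ), 0 < δ → ModelLeft a v 1 (-1) (-1) →
      ∃ ε₀ > (0 : ℝ), ∀ ε : ℝ, 0 < ε → ε < ε₀ → ∀ g : E3 → ℝ, IsEtaForm ε g →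
        IX1model a v δ g + IX2model a v δ g = 0) := by
  constructor
  · intro a v δ hδ hm
    obtain ⟨ε₀, h0, h⟩ := aux_model a v δ hδ 1 1 1 hm
    refine ⟨ε₀, h0, fun ε hε hε' g hg => ?_⟩
    obtain ⟨e1, e2⟩ := h ε hε hε' g hg
    rw [e1, e2]; norm_num
  · intro a v δ hδ hm
    obtain ⟨ε₀, h0, h⟩ := aux_model a v δ hδ 1 (-1) (-1) hm
    refine ⟨ε₀, h0, fun ε hε hε' g hg => ?_⟩
    obtain ⟨e1, e2⟩ := h ε hε hε' g hg
    rw [e1, e2]; norm_num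
end
end
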